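/- arXiv:2111.10126 — 13 statements merged into one kernel-verified Lean document; each statement's English description precedes it below -/
import Mathlib

section
/- Let ℓ, k, t be positive integers, let F be a finite field, and let b be a positive integer with b > ℓ/k. There is a t-private, k-server linear HSS for CONCAT_ℓ(F) with all output shares in F^b (and hence download rate ℓ/(kb)) if and only if there is an F-linear code C ⊆ (F^b)^k with dim_F(C) ≥ ℓ (i.e., rate at least ℓ/(kb)) and block distance at least t+1. Moreover, in the 'if' direction, the HSS can be taken so that Share is t-private k-party CNF sharing, with total upload cost k·ℓ·binom(k−1,t)·log₂|F| bits. -/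
/-!
The bridge between the two sides is transposition of the reconstruction map.  A linear map
`Rec : (F^b)^k → F^ℓ` and a family of `ℓ` words of `(F^b)^k` are the same data: the rows of `Rec`.

* From an HSS to a code (`isGoodCode_of_isLinearHSS`): the code is the row space of `Rec`.
  Correctness makes `Rec` surjective, so the rows are independent.  A nonzero combination `μ` of
  rows supported on at most `t` blocks `T` would let the servers in `T` compute `∑ i, μ i * x i`
  from their shares alone, contradicting privacy.
* From a code to a CNF-based HSS (`isCNFLinearHSS_of_isGoodCode`): let the rows of `Rec` be `ℓ`
  independent codewords.  No nonzero codeword is supported on a `t`-set `S`, so dually `Rec` stays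
  surjective on words vanishing on `S` (`exists_rec_eq_of_vanish`).  Hence the servers outside `S`,
  who all know the additive shares `(xs i S)_i`, can jointly output a preimage of that vector;
  summing over `S` gives a preimage of `x`.
* CNF sharing is private since a coalition `T` misses every share indexed by a `t`-set `S₁ ⊇ T`,
  so changing the secret can be absorbed in the share indexed by `S₁`.
-/

open scoped BigOperators

/-- The index type for the `t`-element subsets of `[k]`. -/
abbrev TSubset (k t : ℕ) : Type := {S : Finset (Fin k) // S.card = t}

/-- A `t`-private `k`-server linear HSS for `CONCAT_ℓ(F)` with all output shares in `F^b`: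
an `F`-linear sharing map applied independently (with independent uniform randomness) to each
of the `ℓ` inputs, arbitrary evaluation functions, and an `F`-linear reconstruction map,
satisfying perfect correctness and perfect `t`-privacy (identical view distributions,
expressed by counting randomness values leading to each view). -/
def IsLinearHSSForConcat (F : Type) [Field F] [Fintype F] (ℓ k t b : ℕ) : Prop :=
  ∃ (e : ℕ) (c : Fin k → ℕ)
    (Share : (F × (Fin e → F)) →ₗ[F] (∀ j : Fin k, Fin (c j) → F))
    (Eval : ∀ j : Fin k, (Fin ℓ → (Fin (c j) → F)) → (Fin b → F))
    (Rec : (Fin k → (Fin b → F)) →ₗ[F] (Fin ℓ → F)),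
    (∀ (x : Fin ℓ → F) (r : Fin ℓ → (Fin e → F)),
      Rec (fun j => Eval j (fun i => Share (x i, r i) j)) = x) ∧
    (∀ T : Finset (Fin k), T.card ≤ t → ∀ x x' : F,
      ∀ v : ∀ j : ↥T, Fin (c j.1) → F,
        Nat.card {r : Fin e → F // (fun j : ↥T => Share (x, r) j.1) = v} =
          Nat.card {r : Fin e → F // (fun j : ↥T => Share (x', r) j.1) = v})

/-- An `F`-linear code `C ⊆ (F^b)^k` with `dim_F C ≥ ℓ` (rate at least `ℓ/(kb)`) and
block distance at least `dist`. -/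
def IsGoodCode (F : Type) [Field F] [Fintype F] (k b ℓ dist : ℕ) : Prop :=
  ∃ C : Submodule F (Fin k → (Fin b → F)),
    ℓ ≤ Module.finrank F C ∧
    ∀ c ∈ C, ∀ c' ∈ C, c ≠ c' → dist ≤ Nat.card {j : Fin k // c j ≠ c' j}

/-- A `k`-server HSS for `CONCAT_ℓ(F)` whose sharing is `t`-private `k`-party CNF sharing,
with output shares in `F^b`: correctness holds for every additive sharing of each input over
the `t`-subsets of `[k]`, party `j` seeing exactly the shares indexed by subsets not
containing `j`. -/
def IsCNFLinearHSSForConcat (F : Type) [Field F] [Fintype F] (ℓ k t b : ℕ) : Prop :=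
  ∃ (Eval : ∀ j : Fin k, (Fin ℓ → ({S : TSubset k t // j ∉ S.1} → F)) → (Fin b → F))
    (Rec : (Fin k → (Fin b → F)) →ₗ[F] (Fin ℓ → F)),
    ∀ (x : Fin ℓ → F) (xs : Fin ℓ → TSubset k t → F),
      (∀ i, ∑ S, xs i S = x i) →
      Rec (fun j => Eval j (fun i S => xs i S.1)) = x

/-- `t`-privacy of `t`-private `k`-party CNF sharing: for any coalition `T` of at most `t`
parties, the joint view (the shares indexed by subsets missed by some member of `T`) has the
same distribution for any two secrets, the additive shares being uniform conditioned on
summing to the secret. -/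
def CNFPrivate (F : Type) [Field F] [Fintype F] (k t : ℕ) : Prop :=
  ∀ T : Finset (Fin k), T.card ≤ t → ∀ x x' : F,
    ∀ v : {S : TSubset k t // ∃ j ∈ T, j ∉ S.1} → F,
      Nat.card {xs : TSubset k t → F //
          (∑ S, xs S = x) ∧ ∀ S : {S : TSubset k t // ∃ j ∈ T, j ∉ S.1}, xs S.1 = v S} =
        Nat.card {xs : TSubset k t → F //
          (∑ S, xs S = x') ∧ ∀ S : {S : TSubset k t // ∃ j ∈ T, j ∉ S.1}, xs S.1 = v S}

/-- The word `∑ μ i • (row i of Rec)`, where the rows of `Rec` are read off the standard basis. -/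
def rowComb {F : Type} [Field F] {ℓ k b : ℕ}
    (Rec : (Fin k → (Fin b → F)) →ₗ[F] (Fin ℓ → F)) :
    (Fin ℓ → F) →ₗ[F] (Fin k → (Fin b → F)) where
  toFun μ j a := ∑ i, μ i * Rec (Pi.single j (Pi.single a 1)) i
  map_add' μ ν := by
    ext j a
    simp [add_mul, Finset.sum_add_distrib]
  map_smul' c μ := by
    ext j a
    simp [Finset.mul_sum, mul_assoc]

/-- `rowComb Rec` is the transpose of `Rec` for the standard pairings. -/
lemma sum_mul_rec {F : Type} [Field F] {ℓ k b : ℕ}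
    (Rec : (Fin k → (Fin b → F)) →ₗ[F] (Fin ℓ → F)) (μ : Fin ℓ → F) (y : Fin k → Fin b → F) :
    ∑ i, μ i * Rec y i = ∑ j, ∑ a, rowComb Rec μ j a * y j a := by
  have hy : y = ∑ j, ∑ a, y j a • (Pi.single j (Pi.single a 1) : Fin k → Fin b → F) := by
    ext j a
    simp only [Finset.sum_apply, Pi.smul_apply, smul_eq_mul]
    rw [Finset.sum_eq_single j]
    · simp [Pi.single_apply]
    · intro j' _ hne
      simp [Pi.single_eq_of_ne hne.symm]
    · simp
  conv_lhs => rw [hy]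
  simp only [map_sum, map_smul, Finset.sum_apply, Pi.smul_apply, smul_eq_mul, Finset.mul_sum,
    rowComb, LinearMap.coe_mk, AddHom.coe_mk, Finset.sum_mul]
  rw [Finset.sum_comm]
  refine Finset.sum_congr rfl fun j _ => ?_
  rw [Finset.sum_comm]
  refine Finset.sum_congr rfl fun a _ => Finset.sum_congr rfl fun i _ => ?_
  ring

/-- The row space of the reconstruction map is a good code. -/
lemma isGoodCode_of_isLinearHSS {F : Type} [Field F] [Fintype F] {ℓ k t b : ℕ}
    (h : IsLinearHSSForConcat F ℓ k t b) : IsGoodCode F k b ℓ (t + 1) := by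
  classical
  obtain ⟨e, c, Share, Eval, Rec, hcor, hpriv⟩ := h
  -- A row combination is nonzero on more than `t` blocks unless its coefficients vanish.
  have key : ∀ μ : Fin ℓ → F, μ ≠ 0 → t + 1 ≤ Nat.card {j : Fin k // rowComb Rec μ j ≠ 0} := by
    intro μ hμ
    by_contra hlt
    obtain ⟨i₀, hi₀⟩ := Function.ne_iff.mp hμ
    set T : Finset (Fin k) := Finset.univ.filter fun j => rowComb Rec μ j ≠ 0 with hT
    have hTc : T.card ≤ t := by
      rw [Nat.subtype_card T (by simp [hT])] at hlt
      omega
    -- Privacy: some randomness makes the secret `1` look to `T` like the secret `0`.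
    obtain ⟨r', hr'⟩ : ∃ r' : Fin e → F,
        (fun j : ↥T => Share (1, r') j.1) = fun j : ↥T => Share (0, 0) j.1 := by
      have hc := hpriv T hTc 1 0 (fun j : ↥T => Share (0, 0) j.1)
      have hpos : 0 < Nat.card {r : Fin e → F //
          (fun j : ↥T => Share (0, r) j.1) = fun j : ↥T => Share (0, 0) j.1} :=
        Nat.card_pos_iff.mpr ⟨⟨⟨0, rfl⟩⟩, inferInstance⟩
      rw [← hc] at hpos
      obtain ⟨⟨r', hr'⟩⟩ := (Nat.card_pos_iff.mp hpos).1
      exact ⟨r', hr'⟩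
    have h0 := sum_mul_rec Rec μ (fun j => Eval j fun i =>
      Share ((0 : Fin ℓ → F) i, (0 : Fin ℓ → Fin e → F) i) j)
    have h1 := sum_mul_rec Rec μ (fun j => Eval j fun i =>
      Share ((Pi.single i₀ 1 : Fin ℓ → F) i, (Pi.single i₀ r' : Fin ℓ → Fin e → F) i) j)
    rw [hcor] at h0 h1
    have heq : ∀ j, rowComb Rec μ j ≠ 0 →
        (fun i => Share ((Pi.single i₀ 1 : Fin ℓ → F) i,
          (Pi.single i₀ r' : Fin ℓ → Fin e → F) i) j) =
        fun i => Share ((0 : Fin ℓ → F) i, (0 : Fin ℓ → Fin e → F) i) j := by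
      intro j hj
      funext i
      by_cases hi : i = i₀
      · subst hi
        have := congrFun hr' ⟨j, by simp [hT, hj]⟩
        simpa using this
      · simp [hi]
    have h01 : ∑ i, μ i * (Pi.single i₀ 1 : Fin ℓ → F) i = ∑ i, μ i * (0 : Fin ℓ → F) i := by
      rw [h0, h1]
      refine Finset.sum_congr rfl fun j _ => ?_
      by_cases hj : rowComb Rec μ j = 0
      · simp [hj]
      · rw [heq j hj]
    apply hi₀
    simpa [Pi.single_apply] using h01
  have hinj : Function.Injective (rowComb Rec) := by
    rw [injective_iff_map_eq_zero]
    intro μ h0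
    by_contra hμ
    have := key μ hμ
    simp [h0] at this
  refine ⟨LinearMap.range (rowComb Rec), ?_, ?_⟩
  · rw [LinearMap.finrank_range_of_inj hinj]
    simp
  · rintro _ ⟨μ, rfl⟩ _ ⟨ν, rfl⟩ hne
    have := key (μ - ν) (fun h => hne (by rw [sub_eq_zero.mp h]))
    simpa [sub_eq_zero] using this

/-- If every nonzero combination of the rows of `Rec` is nonzero on more than `t` blocks, then `Rec`
is already surjective on the words that vanish on a given set of at most `t` blocks. -/
lemma exists_rec_eq_of_vanish {F : Type} [Field F] {ℓ k t b : ℕ}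
    (Rec : (Fin k → (Fin b → F)) →ₗ[F] (Fin ℓ → F))
    (hdist : ∀ μ : Fin ℓ → F, μ ≠ 0 → t + 1 ≤ Nat.card {j : Fin k // rowComb Rec μ j ≠ 0})
    (S : Finset (Fin k)) (hS : S.card ≤ t) (z : Fin ℓ → F) :
    ∃ y : Fin k → Fin b → F, (∀ j ∈ S, y j = 0) ∧ Rec y = z := by
  classical
  let V : Submodule F (Fin k → Fin b → F) := Submodule.pi (S : Set (Fin k)) fun _ => ⊥
  suffices hV : V.map Rec = ⊤ by
    obtain ⟨y, hy, hyz⟩ : z ∈ V.map Rec := hV ▸ Submodule.mem_top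
    exact ⟨y, fun j hj => by simpa using (Submodule.mem_pi.mp hy) j hj, hyz⟩
  by_contra hne
  -- A functional killing the image of `V` is a row combination supported on `S`.
  obtain ⟨f, hf0, hf⟩ := Submodule.exists_le_ker_of_lt_top _ (lt_top_iff_ne_top.mpr hne)
  let μ : Fin ℓ → F := fun i => f (Pi.single i 1)
  have hfμ : ∀ w, f w = ∑ i, μ i * w i := by
    intro w
    conv_lhs => rw [pi_eq_sum_univ' w]
    simp only [map_sum, map_smul, smul_eq_mul, μ]
    refine Finset.sum_congr rfl fun i _ => ?_
    rw [mul_comm]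
  have hμ : μ ≠ 0 := by
    intro h
    apply hf0
    refine LinearMap.ext fun w => ?_
    simp [hfμ, h]
  have hsupp : ∀ j, rowComb Rec μ j ≠ 0 → j ∈ S := by
    intro j hj
    by_contra hjS
    apply hj
    funext a
    have hmem : (Pi.single j (Pi.single a 1) : Fin k → Fin b → F) ∈ V := by
      refine Submodule.mem_pi.mpr fun j' hj' => ?_
      have : j' ≠ j := fun h => hjS (h ▸ hj')
      simp [this]
    have h0 := hf (Submodule.mem_map_of_mem hmem)
    rw [LinearMap.mem_ker, hfμ] at h0
    exact h0
  have h1 := hdist μ hμ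
  rw [Nat.card_eq_fintype_card, Fintype.card_subtype] at h1
  have h2 : (Finset.univ.filter fun j => rowComb Rec μ j ≠ 0).card ≤ S.card :=
    Finset.card_le_card fun j hj => hsupp j (by simpa using hj)
  omega

lemma isCNFLinearHSS_of_isGoodCode {F : Type} [Field F] [Fintype F] {ℓ k t b : ℕ}
    (h : IsGoodCode F k b ℓ (t + 1)) : IsCNFLinearHSSForConcat F ℓ k t b := by
  classical
  obtain ⟨C, hC, hd⟩ := h
  obtain ⟨v, hv⟩ := exists_linearIndependent_of_le_finrank hC
  let Rec : (Fin k → (Fin b → F)) →ₗ[F] (Fin ℓ → F) :=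
    { toFun := fun y i => ∑ j, ∑ a, (v i).1 j a * y j a
      map_add' := fun y y' => by
        ext i
        simp [mul_add, Finset.sum_add_distrib]
      map_smul' := fun c y => by
        ext i
        simp [Finset.mul_sum, mul_left_comm] }
  have hrow : ∀ μ : Fin ℓ → F, rowComb Rec μ = ((∑ i, μ i • v i : C) : Fin k → Fin b → F) := by
    intro μ
    ext j a
    have : ∀ i, Rec (Pi.single j (Pi.single a 1)) i = (v i).1 j a := by
      intro i
      change ∑ j', ∑ a', (v i).1 j' a' * _ = _
      rw [Finset.sum_eq_single j]
      · simp [Pi.single_apply]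
      · intro j' _ hne
        simp [hne]
      · simp
    simp [rowComb, this, Finset.sum_apply]
  have hdist : ∀ μ : Fin ℓ → F, μ ≠ 0 →
      t + 1 ≤ Nat.card {j : Fin k // rowComb Rec μ j ≠ 0} := by
    intro μ hμ
    rw [hrow]
    refine hd _ (Subtype.property _) 0 C.zero_mem fun h0 => hμ ?_
    exact funext (Fintype.linearIndependent_iff.mp hv μ (Subtype.ext h0))
  choose Y hY0 hY using fun (S : TSubset k t) (z : Fin ℓ → F) =>
    exists_rec_eq_of_vanish Rec hdist S.1 S.2.le z
  refine ⟨fun j w => ∑ S : {S : TSubset k t // j ∉ S.1}, Y S.1 (fun i => w i S) j, Rec, ?_⟩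
  intro x xs hx
  have hsum : (fun j => ∑ S : {S : TSubset k t // j ∉ S.1}, Y S.1 (fun i => xs i S.1) j) =
      ∑ S : TSubset k t, Y S fun i => xs i S := by
    funext j
    rw [Finset.sum_apply, ← Fintype.sum_subtype_add_sum_subtype (fun S : TSubset k t => j ∉ S.1)
      fun S => Y S (fun i => xs i S) j]
    -- Servers inside `S` contribute nothing.
    have h0 : ∀ S : {S : TSubset k t // ¬ j ∉ S.1}, Y S.1 (fun i => xs i S.1) j = 0 :=
      fun S => hY0 _ _ _ (not_not.mp S.2)
    simp [h0]
  rw [hsum, map_sum]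
  funext i
  simp [hY, hx]

/-- The counts agree because shifting the additive share indexed by a `t`-set containing the
coalition changes the secret and leaves the coalition's view unchanged; `t ≤ k` is what makes such
a `t`-set exist. -/
lemma cnfPrivate_of_le {F : Type} [Field F] [Fintype F] {k t : ℕ} (htk : t ≤ k) :
    CNFPrivate F k t := by
  classical
  intro T hT x x' v
  obtain ⟨S₁, hTS, hS₁⟩ := Finset.exists_superset_card_eq hT (by simpa using htk)
  refine Nat.card_congr (Equiv.subtypeEquiv
    (Equiv.addRight (Pi.single (⟨S₁, hS₁⟩ : TSubset k t) (x' - x))) fun xs => ?_)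
  refine and_congr ?_ (forall_congr' fun S => ?_)
  · simp only [Equiv.coe_addRight, Pi.add_apply, Finset.sum_add_distrib, Finset.sum_pi_single',
      Finset.mem_univ, if_true]
    constructor <;> intro h <;> linear_combination h
  · obtain ⟨S, j, hj, hjS⟩ := S
    have : S ≠ ⟨S₁, hS₁⟩ := by
      rintro rfl
      exact hjS (hTS hj)
    simp [this]

/-- CNF sharing is realised as a linear map of the secret and of uniform randomness indexed by all
`t`-sets; the randomness at one fixed `t`-set is redundant, which affects neither property. -/
lemma isLinearHSS_of_isCNF {F : Type} [Field F] [Fintype F] {ℓ k t b : ℕ} (htk : t ≤ k)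
    (h : IsCNFLinearHSSForConcat F ℓ k t b) : IsLinearHSSForConcat F ℓ k t b := by
  classical
  obtain ⟨Eval, Rec, hcor⟩ := h
  obtain ⟨U₀, -, hS₀⟩ := Finset.exists_superset_card_eq (s := (∅ : Finset (Fin k))) (n := t)
    (by simp) (by simpa using htk)
  let S₀ : TSubset k t := ⟨U₀, hS₀⟩
  let E := Fintype.equivFin (TSubset k t)
  let Q : ∀ j : Fin k, {S : TSubset k t // j ∉ S.1} ≃ Fin _ := fun j => Fintype.equivFin _
  -- Additive shares: the randomness `r`, with the entry at `S₀` corrected so that they sum to `x`.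
  let A : F → (Fin (Fintype.card (TSubset k t)) → F) → TSubset k t → F := fun x r S =>
    r (E S) + if S = S₀ then x - ∑ m, r m else 0
  have hA : ∀ x r, ∑ S, A x r S = x := by
    intro x r
    simp only [A, Finset.sum_add_distrib, Finset.sum_ite_eq', Finset.mem_univ, if_true]
    rw [Equiv.sum_comp E r]
    ring
  let Share : (F × (Fin (Fintype.card (TSubset k t)) → F)) →ₗ[F]
      (∀ j : Fin k, Fin (Fintype.card {S : TSubset k t // j ∉ S.1}) → F) :=
    { toFun := fun p j q => A p.1 p.2 ((Q j).symm q).1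
      map_add' := fun p p' => by
        ext j q
        simp only [A, Prod.fst_add, Prod.snd_add, Pi.add_apply, Finset.sum_add_distrib]
        split_ifs <;> ring
      map_smul' := fun c p => by
        ext j q
        simp only [A, Prod.smul_fst, Prod.smul_snd, Pi.smul_apply, smul_eq_mul,
          RingHom.id_apply, ← Finset.mul_sum]
        split_ifs <;> ring }
  refine ⟨_, _, Share, fun j w => Eval j fun i S => w i (Q j S), Rec, ?_, ?_⟩
  · intro x r
    have := hcor x (fun i => A (x i) (r i)) fun i => hA _ _
    simpa [Share] using this
  · intro T hT x x' v
    obtain ⟨U₁, hTS, hS₁⟩ := Finset.exists_superset_card_eq hT (by simpa using htk)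
    let S₁ : TSubset k t := ⟨U₁, hS₁⟩
    -- Shifting the randomness at `S₁` moves the secret and only the additive share at `S₁`.
    have hshift : ∀ r S, S ≠ S₁ → A x' (r + Pi.single (E S₁) (x' - x)) S = A x r S := by
      intro r S hS
      have hE : E S ≠ E S₁ := fun h => hS (E.injective h)
      simp only [A, Pi.add_apply, Finset.sum_add_distrib, Fintype.sum_pi_single',
        Pi.single_eq_of_ne hE]
      split_ifs <;> ring
    refine Nat.card_congr (Equiv.subtypeEquiv
      (Equiv.addRight (Pi.single (E S₁) (x' - x))) fun r => ?_)
    have : (fun j : ↥T => Share (x', r + Pi.single (E S₁) (x' - x)) j.1) =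
        fun j : ↥T => Share (x, r) j.1 := by
      funext j q
      refine hshift r _ fun h => ((Q j.1).symm q).2 ?_
      rw [h]
      exact hTS j.2
    rw [Equiv.coe_addRight, this]

/-- A nonzero codeword has at most `k` nonzero blocks, so the distance bound forces `t < k`. -/
lemma lt_of_isGoodCode {F : Type} [Field F] [Fintype F] {ℓ k t b : ℕ} (hℓ : 0 < ℓ)
    (h : IsGoodCode F k b ℓ (t + 1)) : t < k := by
  classical
  obtain ⟨C, hC, hd⟩ := h
  have : Nontrivial C := Module.nontrivial_of_finrank_pos (R := F) (by omega)
  obtain ⟨c, hc⟩ := exists_ne (0 : C)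
  have h1 := hd c.1 c.2 0 C.zero_mem (by simpa using hc)
  have h2 : Nat.card {j : Fin k // c.1 j ≠ (0 : Fin k → Fin b → F) j} ≤ k := by
    rw [Nat.card_eq_fintype_card]
    exact (Fintype.card_subtype_le _).trans (Fintype.card_fin k).le
  omega

lemma card_tSubset_notMem {k : ℕ} (t : ℕ) (j : Fin k) :
    Nat.card {S : TSubset k t // j ∉ S.1} = (k - 1).choose t := by
  classical
  have e : {S : TSubset k t // j ∉ S.1} ≃
      ↥(Finset.powersetCard t (Finset.univ.erase j : Finset (Fin k))) :=
    { toFun := fun S => ⟨S.1.1, Finset.mem_powersetCard.mpr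
        ⟨fun i hi => Finset.mem_erase.mpr ⟨fun h => S.2 (h ▸ hi), Finset.mem_univ _⟩, S.1.2⟩⟩
      invFun := fun S => ⟨⟨S.1, (Finset.mem_powersetCard.mp S.2).2⟩, fun h =>
        Finset.notMem_erase j _ ((Finset.mem_powersetCard.mp S.2).1 h)⟩
      left_inv := fun _ => rfl
      right_inv := fun _ => rfl }
  rw [Nat.card_congr e, Nat.card_eq_fintype_card, Fintype.card_coe, Finset.card_powersetCard,
    Finset.card_erase_of_mem (Finset.mem_univ j), Finset.card_univ, Fintype.card_fin]

/-- **Download rate of HSS-for-concatenation is captured by the distance of linear codes.**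
There is a `t`-private `k`-server linear HSS for `CONCAT_ℓ(F)` with output shares in `F^b`
iff there is an `F`-linear code `C ⊆ (F^b)^k` of dimension at least `ℓ` and block distance
at least `t+1`.  Moreover, in the "if" direction the HSS can be taken with `t`-private
`k`-party CNF sharing (which is `t`-private), each server receiving `(k-1).choose t` field
elements per input, i.e. total upload cost `k·ℓ·binom(k−1,t)·log₂|F|` bits. -/
theorem linear_hss_for_concat_iff_code (F : Type) [Field F] [Fintype F]
    (ℓ k t b : ℕ) (hℓ : 0 < ℓ) (hk : 0 < k) (ht : 0 < t) (hb : ℓ < b * k) :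
    (IsLinearHSSForConcat F ℓ k t b ↔ IsGoodCode F k b ℓ (t + 1)) ∧
    (IsGoodCode F k b ℓ (t + 1) →
      IsCNFLinearHSSForConcat F ℓ k t b ∧ CNFPrivate F k t ∧
        ∀ j : Fin k, Nat.card {S : TSubset k t // j ∉ S.1} = (k - 1).choose t) := by
  exact ⟨⟨isGoodCode_of_isLinearHSS, fun h =>
      isLinearHSS_of_isCNF (lt_of_isGoodCode hℓ h).le (isCNFLinearHSS_of_isGoodCode h)⟩,
    fun h => ⟨isCNFLinearHSS_of_isGoodCode h, cnfPrivate_of_le (lt_of_isGoodCode hℓ h).le,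
      card_tSubset_notMem t⟩⟩
end

section
/- Let k, t, b, ℓ be positive integers with ℓ < bk and let F be a finite field. There is a t-private k-party ℓ-LMSSS over F with all shares in F^b and with the full party set [k] qualified (in particular, with information rate ℓ/(kb)) if and only if there is an F-linear code C ⊆ (F^b)^k of rate at least ℓ/(kb) (equivalently, dim_F(C) ≥ ℓ) and block distance at least t+1. -/
/-!
The two notions are exchanged by transposition with respect to the standard bilinear form on
`(F^b)^k`. A surjective reconstruction map `Rec : (F^b)^k → F^ℓ` is the transpose of an injective
encoder `g : F^ℓ → (F^b)^k`, i.e. `⟨g y, v⟩ = y · Rec v`, and the code is the range of `g`.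

If `g y` is supported on a set `T` of at most `t` parties, then `y · x = ⟨g y, Share (x, r)⟩` is a
function of the view of `T`; privacy makes it constant in `x`, so `y = 0`. Hence the code has block
distance at least `t + 1`.

Conversely, let the code have block distance at least `t + 1` and let `|T| ≤ t`. No nonzero `g y` is
supported on `T`, which by duality says that `Rec` stays surjective on the vectors vanishing on `T`
(`exists_preimage_vanishing`). The scheme sharing `x` as a uniformly random element of `Rec⁻¹ {x}`
is then private: translating by a vector that vanishes on `T` and reconstructs to `x' - x` matches
the sharings of `x` with those of `x'` without changing the view of `T`.
-/

open scoped BigOperators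

/-- A `t`-private `k`-party `ℓ`-LMSSS over `F` with all shares in `F^b` and the full party
set `[k]` qualified: an `F`-linear sharing map `Share : F^ℓ × F^e → (F^b)^k` and an
`F`-linear reconstruction map `Rec : (F^b)^k → F^ℓ` with `Rec (Share x r) = x`, such that
any coalition of at most `t` parties sees identically distributed shares for any two
secrets (expressed by counting randomness values leading to each view). -/
def IsLMSSS (F : Type) [Field F] [Fintype F] (k ℓ t b : ℕ) : Prop :=
  ∃ (e : ℕ)
    (Share : ((Fin ℓ → F) × (Fin e → F)) →ₗ[F] (Fin k → (Fin b → F)))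
    (Rec : (Fin k → (Fin b → F)) →ₗ[F] (Fin ℓ → F)),
    (∀ (x : Fin ℓ → F) (r : Fin e → F), Rec (Share (x, r)) = x) ∧
    (∀ T : Finset (Fin k), T.card ≤ t → ∀ x x' : Fin ℓ → F,
      ∀ v : ↥T → (Fin b → F),
        Nat.card {r : Fin e → F // (fun j : ↥T => Share (x, r) j.1) = v} =
          Nat.card {r : Fin e → F // (fun j : ↥T => Share (x', r) j.1) = v})

/-- The standard bilinear form on `(F^b)^k`. -/
def blockPairing {F : Type} [Field F] {k b : ℕ} (u v : Fin k → Fin b → F) : F :=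
  ∑ j, ∑ i, u j i * v j i

lemma blockPairing_single {F : Type} [Field F] {k b : ℕ} (u : Fin k → Fin b → F)
    (j : Fin k) (i : Fin b) :
    blockPairing u (Pi.single j (Pi.single i 1)) = u j i := by
  unfold blockPairing
  rw [Finset.sum_eq_single j, Finset.sum_eq_single i]
  · simp
  · intro i' _ h
    simp [h]
  · simp
  · intro j' _ h
    simp [h]
  · simp

/-- Every linear map `(F^b)^k → F^ℓ` has a transpose. -/
lemma exists_transpose {F : Type} [Field F] {k b ℓ : ℕ}
    (R : (Fin k → Fin b → F) →ₗ[F] (Fin ℓ → F)) :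
    ∃ g : (Fin ℓ → F) →ₗ[F] (Fin k → Fin b → F),
      ∀ y v, blockPairing (g y) v = ∑ m, y m * R v m := by
  refine ⟨{ toFun := fun y j i => ∑ m, y m * R (Pi.single j (Pi.single i 1)) m
            map_add' := ?_
            map_smul' := ?_ }, ?_⟩
  · intro y z
    ext j i
    simp [add_mul, Finset.sum_add_distrib]
  · intro a y
    ext j i
    simp [mul_assoc, Finset.mul_sum]
  · intro y v
    have hv : v = ∑ j, ∑ i, v j i • Pi.single j (Pi.single i (1 : F)) := by
      ext j i
      simp [Finset.sum_apply, Pi.single_apply, Finset.sum_ite_eq, ite_apply]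
    conv_rhs => rw [hv]
    simp only [blockPairing, LinearMap.coe_mk, AddHom.coe_mk, map_sum, map_smul,
      Finset.sum_apply, Pi.smul_apply, smul_eq_mul, Finset.mul_sum, Finset.sum_mul]
    conv_rhs => rw [Finset.sum_comm]
    refine Finset.sum_congr rfl fun j _ => ?_
    conv_rhs => rw [Finset.sum_comm]
    refine Finset.sum_congr rfl fun i _ => Finset.sum_congr rfl fun m _ => ?_
    ring

/-- Every linear map `F^ℓ → (F^b)^k` is the transpose of a linear map in the other direction. -/
lemma exists_isTranspose {F : Type} [Field F] {k b ℓ : ℕ}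
    (g : (Fin ℓ → F) →ₗ[F] (Fin k → Fin b → F)) :
    ∃ R : (Fin k → Fin b → F) →ₗ[F] (Fin ℓ → F),
      ∀ y v, blockPairing (g y) v = ∑ m, y m * R v m := by
  refine ⟨{ toFun := fun v m => blockPairing (g (Pi.single m 1)) v
            map_add' := ?_
            map_smul' := ?_ }, ?_⟩
  · intro y z
    ext m
    simp [blockPairing, mul_add, Finset.sum_add_distrib]
  · intro a y
    ext m
    simp [blockPairing, Finset.mul_sum, mul_left_comm]
  · intro y v
    have hy : y = ∑ m, y m • Pi.single m (1 : F) := by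
      ext m
      simp [Finset.sum_apply, Pi.single_apply]
    conv_lhs => rw [hy]
    simp only [blockPairing, LinearMap.coe_mk, AddHom.coe_mk, map_sum, map_smul,
      Finset.sum_apply, Pi.smul_apply, smul_eq_mul, Finset.mul_sum, Finset.sum_mul]
    conv_rhs => rw [Finset.sum_comm]
    refine Finset.sum_congr rfl fun j _ => ?_
    conv_rhs => rw [Finset.sum_comm]
    refine Finset.sum_congr rfl fun i _ => Finset.sum_congr rfl fun m _ => ?_
    ring

/-- If no nonzero `g y` is supported on `T`, the transpose of `g` maps the vectors vanishing on `T`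
onto `F^ℓ`: a nonzero functional killing their image would be `y · _` with `g y` supported
on `T`. -/
lemma exists_preimage_vanishing {F : Type} [Field F] {k b ℓ : ℕ}
    {g : (Fin ℓ → F) →ₗ[F] (Fin k → Fin b → F)} {R : (Fin k → Fin b → F) →ₗ[F] (Fin ℓ → F)}
    (hgR : ∀ y v, blockPairing (g y) v = ∑ m, y m * R v m) (T : Finset (Fin k))
    (hT : ∀ y, (∀ j, j ∉ T → g y j = 0) → y = 0) (x : Fin ℓ → F) :
    ∃ v, R v = x ∧ ∀ j ∈ T, v j = 0 := by
  let W : Submodule F (Fin k → Fin b → F) :=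
    { carrier := {v | ∀ j ∈ T, v j = 0}
      add_mem' := fun {a c} ha hc j hj => by simp [ha j hj, hc j hj]
      zero_mem' := fun j _ => rfl
      smul_mem' := fun a v hv j hj => by simp [hv j hj] }
  have htop : W.map R = ⊤ := by
    by_contra hne
    obtain ⟨f, hf0, hf⟩ := Submodule.exists_le_ker_of_lt_top _ (lt_top_iff_ne_top.2 hne)
    have hfy : ∀ z, f z = ∑ m, f (Pi.single m 1) * z m := by
      intro z
      have hz : z = ∑ m, z m • Pi.single m (1 : F) := by
        ext m
        simp [Finset.sum_apply, Pi.single_apply]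
      conv_lhs => rw [hz]
      simp [map_sum, mul_comm]
    have hy := hT (fun m => f (Pi.single m 1)) (by
      intro j hj
      ext i
      refine (blockPairing_single _ j i).symm.trans ?_
      rw [hgR, ← hfy]
      refine hf (Submodule.mem_map_of_mem ?_)
      intro j' hj'
      have : j' ≠ j := fun h => hj (h ▸ hj')
      simp [this])
    apply hf0
    ext m
    simpa using congrFun hy m
  have hx : x ∈ W.map R := htop ▸ Submodule.mem_top
  obtain ⟨v, hv, rfl⟩ := hx
  exact ⟨v, rfl, hv⟩

lemma isGoodCode_of_isLMSSS {F : Type} [Field F] [Fintype F] {k ℓ t b : ℕ}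
    (h : IsLMSSS F k ℓ t b) : IsGoodCode F k b ℓ (t + 1) := by
  classical
  obtain ⟨e, Share, Rec, hrec, hpriv⟩ := h
  obtain ⟨g, hg⟩ := exists_transpose Rec
  have hlow : ∀ y, Nat.card {j // g y j ≠ 0} ≤ t → y = 0 := by
    intro y hy
    let T : Finset (Fin k) := Finset.univ.filter fun j => g y j ≠ 0
    have hT : T.card ≤ t := by
      rwa [Nat.card_eq_fintype_card, Fintype.card_subtype] at hy
    ext m
    -- Some sharing of the `m`-th unit vector gives `T` the zero view, as does `Share (0, 0)`.
    have hcard := hpriv T hT 0 (Pi.single m 1) 0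
    have hpos : 0 < Nat.card {r : Fin e → F // (fun j : ↥T => Share (0, r) j.1) = 0} := by
      have : Nonempty {r : Fin e → F // (fun j : ↥T => Share (0, r) j.1) = 0} :=
        ⟨⟨0, by
          have : Share ((0 : Fin ℓ → F), (0 : Fin e → F)) = 0 := map_zero Share
          rw [this]; rfl⟩⟩
      exact Nat.card_pos
    rw [hcard] at hpos
    obtain ⟨⟨r, hr⟩⟩ := (Nat.card_pos_iff.1 hpos).1
    have h1 := hg y (Share (Pi.single m 1, r))
    rw [hrec] at h1
    have h2 : blockPairing (g y) (Share (Pi.single m 1, r)) = 0 := by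
      refine Finset.sum_eq_zero fun j _ => Finset.sum_eq_zero fun i _ => ?_
      by_cases hj : g y j = 0
      · simp [hj]
      · have := congrFun (congrFun hr ⟨j, by simp [T, hj]⟩) i
        simp only [Pi.zero_apply] at this
        simp [this]
    rw [h2] at h1
    simpa [Pi.single_apply] using h1.symm
  have hinj : Function.Injective g := by
    rw [injective_iff_map_eq_zero]
    intro y hy
    exact hlow y (by simp [hy])
  refine ⟨LinearMap.range g, ?_, ?_⟩
  · rw [LinearMap.finrank_range_of_inj hinj]
    simp
  · rintro _ ⟨y, rfl⟩ _ ⟨y', rfl⟩ hne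
    by_contra hlt
    apply hne
    have := hlow (y - y') (by
      simp only [map_sub, Pi.sub_apply, sub_ne_zero]
      omega)
    rw [sub_eq_zero.1 this]

lemma isLMSSS_of_isGoodCode {F : Type} [Field F] [Fintype F] {k ℓ t b : ℕ}
    (h : IsGoodCode F k b ℓ (t + 1)) : IsLMSSS F k ℓ t b := by
  classical
  obtain ⟨C, hdim, hdist⟩ := h
  -- An encoder onto an `ℓ`-dimensional subcode of `C`.
  obtain ⟨g, hinj, hgC⟩ : ∃ g : (Fin ℓ → F) →ₗ[F] (Fin k → Fin b → F),
      Function.Injective g ∧ ∀ y, g y ∈ C := by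
    have hli := (Module.finBasis F C).linearIndependent.comp _ (Fin.castLE_injective hdim)
    refine ⟨C.subtype ∘ₗ Fintype.linearCombination F
      (Module.finBasis F C ∘ Fin.castLE hdim), ?_, fun y => Subtype.property _⟩
    exact C.injective_subtype.comp hli.fintypeLinearCombination_injective
  obtain ⟨R, hR⟩ := exists_isTranspose g
  have key : ∀ T : Finset (Fin k), T.card ≤ t → ∀ x, ∃ v, R v = x ∧ ∀ j ∈ T, v j = 0 := by
    intro T hT
    refine exists_preimage_vanishing hR T ?_
    intro y hy
    by_contra hne
    have h1 := hdist (g y) (hgC y) 0 C.zero_mem (fun h0 => hne (hinj (by rw [h0, map_zero])))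
    have h2 : Nat.card {j // g y j ≠ (0 : Fin k → Fin b → F) j} ≤ T.card := by
      rw [Nat.card_eq_fintype_card, Fintype.card_subtype]
      refine Finset.card_le_card fun j hj => ?_
      by_contra hjT
      exact (Finset.mem_filter.1 hj).2 (hy j hjT)
    omega
  have hsurj : LinearMap.range R = ⊤ := LinearMap.range_eq_top.2 fun x =>
    (key ∅ (by simp) x).imp fun _ hv => hv.1
  obtain ⟨s, hs⟩ := R.exists_rightInverse_of_surjective hsurj
  have hs' : ∀ x, R (s x) = x := fun x => LinearMap.congr_fun hs x
  let K := (Module.finBasis F (LinearMap.ker R)).equivFun.symm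
  refine ⟨Module.finrank F (LinearMap.ker R),
    s.coprod ((LinearMap.ker R).subtype ∘ₗ K.toLinearMap), R, ?_, ?_⟩
  · intro x r
    have : R (K r : Fin k → Fin b → F) = 0 := (K r).2
    simp [hs', this]
  · intro T hT x x' v
    obtain ⟨w, hw, hwT⟩ := key T hT (x' - x)
    have hker : w - s (x' - x) ∈ LinearMap.ker R := by simp [hw, hs']
    obtain ⟨r₀, hr₀⟩ := K.surjective ⟨_, hker⟩
    refine Nat.card_congr (Equiv.subtypeEquiv (Equiv.addRight r₀) fun r => ?_)
    have hview : (fun j : ↥T =>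
        (s.coprod ((LinearMap.ker R).subtype ∘ₗ K.toLinearMap)) (x', r + r₀) j.1) =
        fun j : ↥T => (s.coprod ((LinearMap.ker R).subtype ∘ₗ K.toLinearMap)) (x, r) j.1 := by
      funext j
      have := hwT j.1 j.2
      simp [map_add, hr₀, this]
      abel
    rw [Equiv.coe_addRight, hview]

/-- There is a `t`-private `k`-party `ℓ`-LMSSS over `F` with all shares in `F^b` and the
full party set qualified (information rate `ℓ/(kb)`) if and only if there is an `F`-linear
code `C ⊆ (F^b)^k` of dimension at least `ℓ` and block distance at least `t+1`. -/
theorem lmsss_iff_code (F : Type) [Field F] [Fintype F]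
    (k ℓ t b : ℕ) (hk : 0 < k) (hℓ : 0 < ℓ) (ht : 0 < t) (hb : 0 < b) (hlt : ℓ < b * k) :
    IsLMSSS F k ℓ t b ↔ IsGoodCode F k b ℓ (t + 1) := by
  exact ⟨isGoodCode_of_isLMSSS, isLMSSS_of_isGoodCode⟩
end

section
/- Let t < k be positive integers and set ℓ = k − t. Let F be a finite field with |F| ≥ k, let E be a field extension of F of degree ℓ, let γ ∈ E be a primitive element (i.e., E = F(γ)), and let α_1, …, α_k be distinct elements of F. Then there exist λ_1, …, λ_k ∈ E and an F-linear map Rec : F^k → E such that for every polynomial f ∈ E[X] of degree at most t, Rec( (Tr_{E/F}(λ_j · f(α_j)))_{j=1}^k ) = f(γ). -/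
/-!
Let `L_j` be the Lagrange basis polynomials over `E` at the nodes `α_j`, and take `λ_j = L_j(γ)`.
For `i < ℓ = k - t` the polynomial `f * X ^ i` has degree less than `k`, so interpolation at the
`k` nodes gives `f(γ) γ ^ i = ∑ j, L_j(γ) f(α_j) α_j ^ i`. Since `α_j ∈ F`, taking traces yields
`Tr(f(γ) γ ^ i) = ∑ j, α_j ^ i Tr(λ_j f(α_j))`, an `F`-linear function of the local outputs.
The powers `γ ^ i`, `i < ℓ`, form an `F`-basis of `E`, and the trace form is nondegenerate because
`E / F` is separable, so `x ↦ (Tr(x γ ^ i))_i` has an `F`-linear left inverse, which recovers `f(γ)`.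
-/

open scoped BigOperators

/-- **HSS-for-concatenation from Shamir sharing (trace-based recovery).**
Let `t < k`, `ℓ = k − t`, let `F` be a finite field with `|F| ≥ k`, let `E/F` be a field
extension of degree `ℓ` with primitive element `γ` (i.e. `E = F(γ)`), and let
`α_1, …, α_k ∈ F` be distinct.  Then there are `λ_1, …, λ_k ∈ E` and an `F`-linear map
`Rec : F^k → E` such that for every polynomial `f ∈ E[X]` of degree at most `t`,
`Rec ((Tr_{E/F} (λ_j · f(α_j)))_j) = f(γ)`. -/
theorem shamir_concat_trace_recovery (F E : Type) [Field F] [Fintype F] [Field E]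
    [Algebra F E] (t k : ℕ) (ht : 0 < t) (htk : t < k) (hFcard : k ≤ Fintype.card F)
    (hdeg : Module.finrank F E = k - t)
    (γ : E) (hγ : IntermediateField.adjoin F {γ} = ⊤)
    (α : Fin k → F) (hα : Function.Injective α) :
    ∃ (lam : Fin k → E) (Rec : (Fin k → F) →ₗ[F] E),
      ∀ f : Polynomial E, f.degree ≤ (t : ℕ) →
        Rec (fun j => Algebra.trace F E (lam j * Polynomial.eval (algebraMap F E (α j)) f))
          = Polynomial.eval γ f := by
  classical
  have hpos : 0 < Module.finrank F E := by omega
  have : FiniteDimensional F E := Module.finite_of_finrank_pos hpos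
  have hint : IsIntegral F γ := Algebra.IsIntegral.isIntegral γ
  have hadj : Algebra.adjoin F {γ} = ⊤ := by
    rw [← IntermediateField.adjoin_simple_toSubalgebra_of_isAlgebraic hint.isAlgebraic, hγ,
      IntermediateField.top_toSubalgebra]
  let pb := PowerBasis.ofAdjoinEqTop hint hadj
  have hgen : pb.gen = γ := PowerBasis.ofAdjoinEqTop_gen hint hadj
  have hdim : pb.dim = k - t := by rw [← hdeg, pb.finrank]
  let a : Fin k → E := fun j => algebraMap F E (α j)
  have ha : Function.Injective a := (algebraMap F E).injective.comp hα
  -- The trace coordinates of `x` with respect to the basis `γ ^ i` determine `x`.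
  let T : E →ₗ[F] (Fin pb.dim → F) :=
    LinearMap.pi fun i => (Algebra.traceForm F E).flip (pb.basis i)
  have hT : LinearMap.ker T = ⊥ := by
    rw [LinearMap.ker_eq_bot']
    intro x hx
    have hzero : Algebra.traceForm F E x = 0 :=
      pb.basis.ext fun i => by simpa [T] using congrFun hx i
    exact (traceForm_nondegenerate F E).1 x fun y => by rw [hzero]; rfl
  obtain ⟨S, hS⟩ := T.exists_leftInverse_of_injective hT
  let M : (Fin k → F) →ₗ[F] (Fin pb.dim → F) :=
    LinearMap.pi fun i => ∑ j, (α j) ^ (i : ℕ) • LinearMap.proj j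
  refine ⟨fun j => (Lagrange.basis Finset.univ a j).eval γ, S ∘ₗ M, fun f hf => ?_⟩
  have key : M (fun j => Algebra.trace F E ((Lagrange.basis Finset.univ a j).eval γ *
      (f.eval (algebraMap F E (α j))))) = T (f.eval γ) := by
    funext i
    -- `f * X ^ i` has degree at most `t + (k - t - 1) < k`, so `k` nodes interpolate it.
    have hd : (f * Polynomial.X ^ (i : ℕ)).degree <
        ((Finset.univ : Finset (Fin k)).card : WithBot ℕ) := by
      have hi : (i : ℕ) < k - t := hdim ▸ i.2
      rw [Polynomial.degree_mul, Polynomial.degree_X_pow, Finset.card_univ, Fintype.card_fin]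
      calc f.degree + ((i : ℕ) : WithBot ℕ) ≤ (t : WithBot ℕ) + ((i : ℕ) : WithBot ℕ) := by gcongr
        _ < (k : WithBot ℕ) := by norm_cast; omega
    have h := congrArg (Polynomial.eval γ) (Lagrange.eq_interpolate ha.injOn hd)
    simp only [Lagrange.interpolate_apply, Polynomial.eval_finsetSum, Polynomial.eval_mul,
      Polynomial.eval_C, Polynomial.eval_pow, Polynomial.eval_X] at h
    have hTi : T (f.eval γ) i = Algebra.trace F E (f.eval γ * γ ^ (i : ℕ)) := by
      rw [← hgen, ← pb.basis_eq_pow i]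
      rfl
    rw [hTi, h, map_sum]
    simp only [M, LinearMap.pi_apply, LinearMap.sum_apply, LinearMap.smul_apply,
      LinearMap.proj_apply]
    refine Finset.sum_congr rfl fun j _ => ?_
    rw [← map_smul, Algebra.smul_def, map_pow]
    congr 1
    simp only [a]
    ring
  rw [LinearMap.comp_apply, key, ← LinearMap.comp_apply, hS, LinearMap.id_apply]
end

section
/- Let d, t, m be positive integers, let k > dt, let F be a finite field with |F| ≥ k, and set ℓ = k − dt. Let E be a field extension of F of degree ℓ with primitive element γ (E = F(γ)), and let α_1, …, α_k be distinct elements of F with γ ∉ {α_1,…,α_k}. Consider the Shamir sharing over E of a secret x ∈ F: a uniformly random polynomial p ∈ E[X] with deg(p) ≤ t and p(γ) = x is chosen, and server j receives p(α_j) ∈ E. Then: (a) this sharing is t-private, i.e., for every T ⊆ [k] with |T| ≤ t, the joint distribution of (p(α_j))_{j∈T} is the same for all secrets x ∈ F; and (b) there exist evaluation functions Eval_j — each mapping a tuple (f_1,…,f_ℓ) ∈ POLY_{d,m}(F)^ℓ together with server j's Shamir shares of the ℓm inputs to a single element of F — and an F-linear map Rec : F^k → F^ℓ such that for all f_1,…,f_ℓ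 ∈ POLY_{d,m}(F), all inputs x_{i,r} ∈ F (i ∈ [m], r ∈ [ℓ]), and all polynomials p_{i,r} ∈ E[X] of degree at most t with p_{i,r}(γ) = x_{i,r}, Rec( (Eval_j((f_r)_r, (p_{i,r}(α_j))_{i,r}))_{j=1}^k ) = (f_r(x_{1,r},…,x_{m,r}))_{r=1}^ℓ. In particular the download cost is k·log₂|F| bits and the download rate is 1 − dt/k. -/
/-!
**Privacy.** For `|T| ≤ t` the polynomial `q = ∏_{j ∈ T} (X - α_j)` has degree at most `t`,
vanishes on the points of `T` and does not vanish at `γ`. Adding the multiple of `q` whose value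
at `γ` is `x' - x` is a bijection between the sharings of `x` and those of `x'` that have
prescribed shares on `T`.

**Evaluation.** Fix an `F`-linear functional `φ : E → F` with `φ 1 ≠ 0`. Since `1, γ, …, γ^(ℓ-1)`
spans `E` over `F`, the pairing `(w, z) ↦ φ (w z)` yields elements `b_0, …, b_(ℓ-1)` of `E` with
`φ (γ^s b_r) = δ_{sr}` (`exists_dual_pow`). Put `G = ∑_r b_r f_r(p_{1,r}, …, p_{m,r})`, a polynomial
over `E` of degree at most `dt` with `G(γ) = ∑_r b_r y_r`, where `y_r = f_r(x_{1,r}, …, x_{m,r})`.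
For `s < ℓ = k - dt` the polynomial `X^s G` has degree less than `k`, so Lagrange interpolation at
the `α_j`, with Lagrange basis `L_j`, gives
`y_s = φ (γ^s G(γ)) = ∑_j α_j^s φ (L_j(γ) G(α_j))`,
because `α_j^s` lies in `F`. Server `j` thus sends `φ (L_j(γ) G(α_j))`, a single element of `F`,
and `Rec` is the Vandermonde map `u ↦ (∑_j α_j^s u_j)_s`.
-/

open scoped BigOperators

open Polynomial in
/-- Translating by a multiple of `∏_{j ∈ T} (X - a_j)` turns polynomials with value `x` at `γ` into
polynomials with value `x'` at `γ`, without changing the values at the `a_j` with `j ∈ T`. -/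
theorem card_sharings_eq {E ι : Type*} [Field E] (t : ℕ) (T : Finset ι) (hT : T.card ≤ t)
    (a : ι → E) (γ : E) (hγ : ∀ j, γ ≠ a j) (x x' : E) (v : ↥T → E) :
    Nat.card {p : E[X] // p.degree ≤ (t : ℕ) ∧ eval γ p = x ∧
        (fun j : ↥T => eval (a j.1) p) = v} =
      Nat.card {p : E[X] // p.degree ≤ (t : ℕ) ∧ eval γ p = x' ∧
        (fun j : ↥T => eval (a j.1) p) = v} := by
  set q : E[X] := ∏ j ∈ T, (X - C (a j)) with hq
  have hqdeg : q.degree ≤ (t : ℕ) := by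
    rw [hq, degree_prod]
    simpa using hT
  have hqγ : eval γ q ≠ 0 := by
    rw [hq, eval_prod, Finset.prod_ne_zero_iff]
    intro j _
    simpa using sub_ne_zero.2 (hγ j)
  have hqT : ∀ j : ↥T, eval (a j.1) q = 0 := fun j => by
    rw [hq, eval_prod]
    exact Finset.prod_eq_zero j.2 (by simp)
  have hdeg : ∀ (p : E[X]) (c : E), p.degree ≤ (t : ℕ) → (p + C c * q).degree ≤ (t : ℕ) :=
    fun p c hp =>
      (degree_add_le _ _).trans
        (max_le hp (smul_eq_C_mul (p := q) c ▸ (degree_smul_le c q).trans hqdeg))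
  refine Nat.card_congr ((Equiv.addRight (C ((x' - x) / eval γ q) * q)).subtypeEquiv ?_)
  intro p
  have hd : (p + C ((x' - x) / eval γ q) * q).degree ≤ (t : ℕ) ↔ p.degree ≤ (t : ℕ) := by
    refine ⟨fun h => ?_, hdeg p _⟩
    have := hdeg _ (-((x' - x) / eval γ q)) h
    simpa using this
  have he : eval γ (p + C ((x' - x) / eval γ q) * q) = x' ↔ eval γ p = x := by
    rw [eval_add, eval_mul, eval_C, div_mul_cancel₀ _ hqγ]
    constructor <;> intro h
    · linear_combination h
    · linear_combination h
  simp only [Equiv.coe_addRight, hd, he]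
  simp [hqT]

/-- Elements dual to the powers of a primitive element `γ`, with respect to the pairing
`(w, z) ↦ φ (w * z)` given by a suitable functional `φ`. -/
theorem exists_dual_pow {F E : Type*} [Field F] [Field E] [Algebra F E] (ℓ : ℕ) (hℓ : 0 < ℓ)
    (hdeg : Module.finrank F E = ℓ) (γ : E) (hγ : IntermediateField.adjoin F {γ} = ⊤) :
    ∃ (φ : E →ₗ[F] F) (b : Fin ℓ → E),
      ∀ s r : Fin ℓ, φ (γ ^ (s : ℕ) * b r) = if r = s then 1 else 0 := by
  have : FiniteDimensional F E := .of_finrank_pos (hdeg ▸ hℓ)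
  obtain ⟨φ, hφ⟩ := Module.Projective.exists_dual_ne_zero F (one_ne_zero (α := E))
  have hmin : (minpoly F γ).natDegree = ℓ :=
    ((Field.primitive_element_iff_minpoly_natDegree_eq F γ).1 hγ).trans hdeg
  have hli : LinearIndependent F fun i : Fin ℓ => γ ^ (i : ℕ) := by
    have := linearIndependent_pow (K := F) γ
    rwa [hmin] at this
  have hspan := hli.span_eq_top_of_card_eq_finrank' (by simp [hdeg])
  let Φ : E →ₗ[F] (Fin ℓ → F) :=
    LinearMap.pi fun s => φ ∘ₗ LinearMap.mulLeft F (γ ^ (s : ℕ))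
  have hinj : Function.Injective Φ := by
    rw [injective_iff_map_eq_zero]
    intro z hz
    by_contra hz0
    -- The functional `w ↦ φ (w z)` kills the powers of `γ`, hence all of `E`, including `w = z⁻¹`.
    have hzero : φ ∘ₗ LinearMap.mulRight F z = 0 := by
      refine LinearMap.ext_on_range hspan fun s => ?_
      simpa [Φ] using congrFun hz s
    have := LinearMap.congr_fun hzero z⁻¹
    simp [hz0] at this
    exact hφ this
  have hsurj : Function.Surjective Φ :=
    (LinearMap.injective_iff_surjective_of_finrank_eq_finrank (by simp [hdeg])).1 hinj
  choose b hb using fun r : Fin ℓ => hsurj (Pi.single r 1)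
  refine ⟨φ, b, fun s r => ?_⟩
  have := congrFun (hb r) s
  simpa [Φ, Pi.single_apply, eq_comm] using this

open Polynomial in
/-- Substituting polynomials of degree at most `t` into a multivariate polynomial of total degree
at most `d` over a smaller field gives degree at most `d * t`. -/
theorem natDegree_aeval_le {F E σ : Type*} [Field F] [Field E] [Algebra F E] (d t : ℕ)
    (f : MvPolynomial σ F) (hf : f.totalDegree ≤ d) (p : σ → E[X])
    (hp : ∀ i, (p i).natDegree ≤ t) : (MvPolynomial.aeval p f).natDegree ≤ d * t := by
  have := MvPolynomial.aeval_natDegree_le (MvPolynomial.map (algebraMap F E) f)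
    ((Finset.sup_mono (MvPolynomial.support_map_subset _ f)).trans hf) p hp
  rwa [MvPolynomial.aeval_map_algebraMap] at this

open Polynomial in
theorem eval_aeval_mvPolynomial {F E σ : Type*} [Field F] [Field E] [Algebra F E]
    (f : MvPolynomial σ F) (p : σ → E[X]) (z : E) :
    eval z (MvPolynomial.aeval p f) = MvPolynomial.aeval (fun i => eval z (p i)) f := by
  have h := MvPolynomial.comp_aeval_apply p ((Polynomial.aeval z : E[X] →ₐ[E] E).restrictScalars F) f
  simpa [Polynomial.coe_aeval_eq_eval] using h

open Polynomial in
/-- If `deg G + s < k`, Lagrange interpolation of `X ^ s * G` at the nodes `α_j` expresses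
`φ (γ ^ s * G(γ))` through one element of `F` per node, which does not depend on `s`. -/
theorem functional_interpolation {F E : Type*} [Field F] [Field E] [Algebra F E] (k s : ℕ)
    (γ : E) (α : Fin k → F) (hα : Function.Injective α) (φ : E →ₗ[F] F) (G : E[X])
    (hG : G.natDegree + s < k) :
    φ (γ ^ s * eval γ G) = ∑ j, α j ^ s *
      φ (eval γ (Lagrange.basis Finset.univ (fun i => algebraMap F E (α i)) j) *
        eval (algebraMap F E (α j)) G) := by
  have hinj : Set.InjOn (fun i => algebraMap F E (α i)) (Finset.univ : Finset (Fin k)) :=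
    (((algebraMap F E).injective).comp hα).injOn
  have hdeg : (X ^ s * G).degree < ((Finset.univ : Finset (Fin k)).card : WithBot ℕ) := by
    refine degree_le_natDegree.trans_lt ?_
    have : (X ^ s * G).natDegree < k := by
      refine natDegree_mul_le.trans_lt ?_
      rw [natDegree_X_pow]
      omega
    simpa using this
  have h := congrArg (eval γ) (Lagrange.eq_interpolate hinj hdeg)
  rw [Lagrange.interpolate_apply, eval_finsetSum] at h
  simp only [eval_mul, eval_pow, eval_X, eval_C] at h
  rw [h, map_sum]
  refine Finset.sum_congr rfl fun j _ => ?_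
  rw [← smul_eq_mul (α j ^ s), ← map_smul, Algebra.smul_def, map_pow]
  congr 1
  ring

/-- **Linear HSS for low-degree polynomials from Shamir sharing.**
Let `d, t, m` be positive, `k > dt`, `F` a finite field with `|F| ≥ k`, `ℓ = k − dt`,
`E/F` an extension of degree `ℓ` with primitive element `γ` (`E = F(γ)`), and
`α_1, …, α_k ∈ F` distinct with `γ ∉ {α_1, …, α_k}`.  Shamir sharing of `x ∈ F` picks a
uniformly random `p ∈ E[X]` with `deg p ≤ t` and `p(γ) = x`, and gives server `j` the
share `p(α_j)`.  Then (a) this sharing is `t`-private, and (b) there are evaluation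
functions `Eval_j` producing a single element of `F` each, and a single `F`-linear
reconstruction map `Rec : F^k → F^ℓ`, that correctly evaluate any tuple of `ℓ` polynomials
of `POLY_{d,m}(F)` on any inputs, for every valid choice of the sharing polynomials;
in particular the download cost is `k·log₂|F|` bits and the download rate is `1 − dt/k`. -/
theorem shamir_hss_for_polynomials (F E : Type) [Field F] [Fintype F] [Field E]
    [Algebra F E] (d t m k : ℕ) (hd : 0 < d) (ht : 0 < t) (hm : 0 < m)
    (hdtk : d * t < k) (hFcard : k ≤ Fintype.card F)
    (hdeg : Module.finrank F E = k - d * t)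
    (γ : E) (hγ : IntermediateField.adjoin F {γ} = ⊤)
    (α : Fin k → F) (hα : Function.Injective α)
    (hγα : ∀ j : Fin k, γ ≠ algebraMap F E (α j)) :
    -- (a) `t`-privacy of the Shamir sharing, with the secret placed at `γ`
    (∀ T : Finset (Fin k), T.card ≤ t → ∀ x x' : F, ∀ v : ↥T → E,
      Nat.card {p : Polynomial E //
          p.degree ≤ (t : ℕ) ∧ Polynomial.eval γ p = algebraMap F E x ∧
          (fun j : ↥T => Polynomial.eval (algebraMap F E (α j.1)) p) = v} =
        Nat.card {p : Polynomial E //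
          p.degree ≤ (t : ℕ) ∧ Polynomial.eval γ p = algebraMap F E x' ∧
          (fun j : ↥T => Polynomial.eval (algebraMap F E (α j.1)) p) = v}) ∧
    -- (b) homomorphic evaluation with one element of `F` downloaded per server
    ∃ (Eval : ∀ _ : Fin k,
        (Fin (k - d * t) → {f : MvPolynomial (Fin m) F // f.totalDegree ≤ d}) →
        (Fin m → Fin (k - d * t) → E) → F)
      (Rec : (Fin k → F) →ₗ[F] (Fin (k - d * t) → F)),
      ∀ (f : Fin (k - d * t) → {f : MvPolynomial (Fin m) F // f.totalDegree ≤ d})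
        (x : Fin m → Fin (k - d * t) → F)
        (p : Fin m → Fin (k - d * t) → Polynomial E),
        (∀ i r, (p i r).degree ≤ (t : ℕ)) →
        (∀ i r, Polynomial.eval γ (p i r) = algebraMap F E (x i r)) →
        Rec (fun j => Eval j f (fun i r => Polynomial.eval (algebraMap F E (α j)) (p i r)))
          = fun r => MvPolynomial.eval (fun i => x i r) (f r).1 := by
  refine ⟨fun T hT x x' v => card_sharings_eq t T hT (fun j => algebraMap F E (α j)) γ hγα
    (algebraMap F E x) (algebraMap F E x') v, ?_⟩
  obtain ⟨φ, b, hb⟩ := exists_dual_pow (k - d * t) (by omega) hdeg γ hγ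
  refine ⟨fun j f sh =>
      φ (Polynomial.eval γ (Lagrange.basis Finset.univ (fun i => algebraMap F E (α i)) j) *
        ∑ r, b r * MvPolynomial.aeval (fun i => sh i r) (f r).1),
    LinearMap.pi fun s => ∑ j, (α j ^ (s : ℕ)) • LinearMap.proj j, ?_⟩
  intro f x p hp hx
  set G : Polynomial E :=
    ∑ r, Polynomial.C (b r) * MvPolynomial.aeval (fun i => p i r) (f r).1 with hG
  have hGdeg : G.natDegree ≤ d * t :=
    Polynomial.natDegree_sum_le_of_forall_le _ _ fun r _ =>
      (Polynomial.natDegree_C_mul_le _ _).trans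
        (natDegree_aeval_le d t _ (f r).2 _ fun i => Polynomial.natDegree_le_of_degree_le (hp i r))
  have hGeval : ∀ z : E, Polynomial.eval z G =
      ∑ r, b r * MvPolynomial.aeval (fun i => Polynomial.eval z (p i r)) (f r).1 := by
    intro z
    simp [hG, Polynomial.eval_finsetSum, eval_aeval_mvPolynomial]
  have hGγ : Polynomial.eval γ G =
      ∑ r, MvPolynomial.eval (fun i => x i r) (f r).1 • b r := by
    rw [hGeval]
    refine Finset.sum_congr rfl fun r _ => ?_
    simp only [hx]
    rw [Algebra.smul_def, mul_comm, ← MvPolynomial.aeval_eq_eval,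
      ← MvPolynomial.aeval_algebraMap_apply]
    rfl
  funext s
  have key := functional_interpolation k s γ α hα φ G (by have := s.2; omega)
  simp only [← hGeval]
  simp only [LinearMap.pi_apply, LinearMap.sum_apply, LinearMap.smul_apply, LinearMap.proj_apply,
    smul_eq_mul]
  rw [← key, hGγ, Finset.mul_sum, map_sum]
  simp only [mul_smul_comm, map_smul, hb]
  simp
end

section
/- For all positive integers d, t, k, w with dt + 1 ≤ k, there is a t-private k-server PIR protocol for databases of N records, each record a string of w·(k−dt)·⌈log₂k⌉ bits, with download cost w·k·⌈log₂k⌉ bits (hence download rate 1 − dt/k) and upload cost at most k·m·(k−dt)²·⌈log₂k⌉ bits, where m is the smallest positive integer with N ≤ binom(m,d) (so the upload cost is O(k³·log k·N^{1/d}) bits). -/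
open scoped BigOperators

/-!
Let `s = k - d t`, `q = 2 ^ ⌈log₂ k⌉ ≥ k`, and let `F ⊆ E` be finite fields with `|F| = q` and
`[E : F] = s`. A record is a vector in `E ^ w`. Records are indexed by distinct `d`-subsets `S i` of
the `m` variables, so that record `i` is the value of the form `∑ i, D i ∏ x ∈ S i, y x` at the
indicator vector `z` of `S i`.

Assume `s > 1`. The client picks a random curve `f` over `E` of degree at most `t` with `f(α) = z`,
where `α` generates `E` over `F`, and sends `f(λ_j)` to server `j`, where the `λ_j` are distinct
elements of `F`. The values at any `t` of these points do not depend on `z` in distribution, because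
they can be shifted arbitrarily by Lagrange interpolation (`exists_shift`). The composition `G` of
the form with `f` has degree at most `d t`. Server `j` multiplies `G(λ_j)` by `c(λ_j)`, where
`c = M / (X - α)` and `M` is the minimal polynomial of `α`, and applies a fixed nonzero `F`-linear
functional `φ : E → F`; its answer has `w` symbols of `F`. Since `λ_j ∈ F`, these are the values
of the polynomial `φ(c G) ∈ F[X]` obtained coefficientwise, which has degree at most
`d t + s - 1 < k` and is thus determined by the `k` answers; and `φ(c G)` determines `G(α)`, the
requested record (`eval_eq_zero_of_coeffMap`).

If `s = 1` there may be no room in `F` for `α`, and the secret is put in the leading coefficient of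
the curve instead. `CurveScheme` collects what the two cases have in common.

A query consists of `m` elements of `E`, which is a factor `s` below the upload bound.
-/

namespace HighRatePIR

open Polynomial

/-- Algebraic data of a `k`-server scheme over a field `E` with answers in `F`. The client hides a
vector `z` with entries in `E` in the curve `z • a + b • r`, where `r` is a vector of random
polynomials of degree `< t`; server `j` sees the value of the curve at `pt j`, evaluates a degree
`d` form there and compresses the result with `proj j`. The functional `extract` reads off from
the composed polynomial `G` the value of the form at `z`. -/
structure CurveScheme (d t k : ℕ) (F E : Type) [AddCommGroup F] [Field E] where
  /-- the evaluation points of the servers -/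
  pt : Fin k → E
  /-- the coefficient of the secret in the curve -/
  a : E[X]
  /-- the coefficient of the randomness in the curve -/
  b : E[X]
  /-- the compression of an answer in `E` to an element of `F` -/
  proj : Fin k → E →+ F
  /-- the functional recovering the value at the secret -/
  extract : E[X] →ₗ[E] E
  pt_injective : Function.Injective pt
  b_ne_zero : ∀ j, b.eval (pt j) ≠ 0
  natDegree_curve_le : ∀ (z : E), ∀ r ∈ degreeLT E t, (C z * a + b * r).natDegree ≤ t
  extract_prod : ∀ {ι : Type} (S : Finset ι) (z : ι → E) (r : ι → E[X]), S.card = d →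
    (∀ x, r x ∈ degreeLT E t) → extract (∏ x ∈ S, (C (z x) * a + b * r x)) = ∏ x ∈ S, z x
  extract_eq_zero : ∀ G : E[X], G.natDegree ≤ d * t →
    (∀ j, proj j (G.eval (pt j)) = 0) → extract G = 0

/-! ### Applying a linear functional to the coefficients of a polynomial -/

section CoeffMap

variable {F E : Type} [Field F] [Field E] [Algebra F E]

/-- The polynomial obtained by applying the `F`-linear functional `φ` to every coefficient. -/
noncomputable def coeffMap (φ : E →ₗ[F] F) (A : E[X]) : F[X] :=
  ∑ n ∈ Finset.range (A.natDegree + 1), monomial n (φ (A.coeff n))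

lemma coeff_coeffMap (φ : E →ₗ[F] F) (A : E[X]) (n : ℕ) :
    (coeffMap φ A).coeff n = φ (A.coeff n) := by
  simp only [coeffMap, finsetSum_coeff, coeff_monomial, Finset.sum_ite_eq', Finset.mem_range]
  split_ifs with h
  · rfl
  · rw [coeff_eq_zero_of_natDegree_lt (by omega), map_zero]

lemma natDegree_coeffMap_le (φ : E →ₗ[F] F) (A : E[X]) :
    (coeffMap φ A).natDegree ≤ A.natDegree := by
  rw [natDegree_le_iff_coeff_eq_zero]
  intro n hn
  rw [coeff_coeffMap, coeff_eq_zero_of_natDegree_lt hn, map_zero]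

/-- Evaluation at points of the base field commutes with `coeffMap`. -/
lemma eval_coeffMap (φ : E →ₗ[F] F) (A : E[X]) (x : F) :
    (coeffMap φ A).eval x = φ (A.eval (algebraMap F E x)) := by
  rw [eval_eq_sum_range (p := A), map_sum, coeffMap, eval_finsetSum]
  refine Finset.sum_congr rfl fun n _ => ?_
  rw [eval_monomial, ← map_pow, mul_comm (A.coeff n), ← Algebra.smul_def, map_smul, smul_eq_mul,
    mul_comm]

lemma coeffMap_add (φ : E →ₗ[F] F) (A B : E[X]) :
    coeffMap φ (A + B) = coeffMap φ A + coeffMap φ B := by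
  ext n; simp [coeff_coeffMap]

lemma coeffMap_map_mul (φ : E →ₗ[F] F) (M : F[X]) (A : E[X]) :
    coeffMap φ (M.map (algebraMap F E) * A) = M * coeffMap φ A := by
  ext n
  simp [coeff_coeffMap, coeff_mul, ← Algebra.smul_def]

/-- Let `α` generate `E` over `F`, let `M` be its minimal polynomial, of degree `s`, and let
`c = M / (X - α)`. Writing `G = G(α) + (X - α) G₁` gives `φ(c G) = φ(G(α) c) + M φ(G₁)`, where the
first summand has degree `< deg M`. So if `φ(c G)` vanishes at more than `deg (c G)` points of `F`,
then `φ(G(α) c) = 0`, and since the coefficients of `c` span `E`, `G(α) = 0`. -/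
lemma eval_eq_zero_of_coeffMap [FiniteDimensional F E] {k : ℕ} (φ : E →ₗ[F] F) (hφ : φ ≠ 0)
    (α : E) (hα : IntermediateField.adjoin F {α} = ⊤) (lam : Fin k → F)
    (hlam : Function.Injective lam) (G : E[X]) (hG : G.natDegree + Module.finrank F E ≤ k)
    (h0 : ∀ j, φ ((minpolyDiv F α).eval (algebraMap F E (lam j)) *
      G.eval (algebraMap F E (lam j))) = 0) :
    G.eval α = 0 := by
  have hint : IsIntegral F α := IsIntegral.of_finite F α
  have hs : (minpoly F α).natDegree = Module.finrank F E :=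
    (Field.primitive_element_iff_minpoly_natDegree_eq F α).1 hα
  have hclt : (minpolyDiv F α).natDegree < (minpoly F α).natDegree := natDegree_minpolyDiv_lt hint
  set c := minpolyDiv F α with hc
  have hH : coeffMap φ (c * G) = 0 := by
    refine eq_zero_of_natDegree_lt_card_of_eval_eq_zero _ hlam (fun j => ?_) ?_
    · rw [eval_coeffMap, eval_mul, h0]
    · have h1 := natDegree_coeffMap_le φ (c * G)
      have h2 : (c * G).natDegree ≤ _ := natDegree_mul_le
      rw [Fintype.card_fin]
      omega
  obtain ⟨G₁, hG₁⟩ := X_sub_C_dvd_sub_C_eval (a := α) (p := G)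
  have hdec : c * G = C (G.eval α) * c + (minpoly F α).map (algebraMap F E) * G₁ := by
    rw [← minpolyDiv_spec F α, ← hc]
    linear_combination c * hG₁
  rw [hdec, coeffMap_add, coeffMap_map_mul] at hH
  have hdeg : (coeffMap φ (C (G.eval α) * c)).degree < (minpoly F α).degree := by
    refine degree_lt_degree (lt_of_le_of_lt ((natDegree_coeffMap_le _ _).trans ?_) hclt)
    exact natDegree_C_mul_le _ _
  have hzero : coeffMap φ (C (G.eval α) * c) = 0 :=
    eq_zero_of_dvd_of_degree_lt
      (⟨-coeffMap φ G₁, by linear_combination hH⟩) hdeg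
  by_contra hne
  apply hφ
  have hspan : ∀ e : E, φ (G.eval α * e) = 0 := by
    intro e
    have he : e ∈ Submodule.span F (Set.range (coeff c)) := by
      rw [hc, span_coeff_minpolyDiv hint, Subalgebra.mem_toSubmodule]
      have : e ∈ IntermediateField.adjoin F {α} := by rw [hα]; trivial
      rwa [← IntermediateField.mem_toSubalgebra,
        IntermediateField.adjoin_simple_toSubalgebra_of_isAlgebraic hint.isAlgebraic] at this
    induction he using Submodule.span_induction with
    | mem x hx =>
      obtain ⟨n, rfl⟩ := hx
      have := congrArg (fun p => coeff p n) hzero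
      simpa [coeff_coeffMap] using this
    | zero => simp
    | add x y _ _ hx hy => rw [mul_add, map_add, hx, hy, add_zero]
    | smul q x _ hx => rw [mul_smul_comm, map_smul, hx, smul_zero]
  ext e
  have := hspan ((G.eval α)⁻¹ * e)
  rwa [mul_inv_cancel_left₀ hne] at this

end CoeffMap

/-! ### Existence of the schemes -/

/-- The case `k > d t + 1`: the secret is placed at a generator `α` of the extension `E / F`, which
is not in `F` and thus differs from the evaluation points of all servers. -/
noncomputable def CurveScheme.ofExtension {d t k : ℕ} {F E : Type} [Field F] [Field E] [Algebra F E]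
    [FiniteDimensional F E] (ht : 0 < t) (hs : d * t + Module.finrank F E ≤ k)
    (hs1 : Module.finrank F E ≠ 1) (lam : Fin k → F) (hlam : Function.Injective lam)
    (α : E) (hα : IntermediateField.adjoin F {α} = ⊤) (φ : E →ₗ[F] F) (hφ : φ ≠ 0) :
    CurveScheme d t k F E where
  pt j := algebraMap F E (lam j)
  a := 1
  b := X - C α
  proj j := φ.toAddMonoidHom.comp
    (AddMonoidHom.mulLeft ((minpolyDiv F α).eval (algebraMap F E (lam j))))
  extract := leval α
  pt_injective := (algebraMap F E).injective.comp hlam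
  b_ne_zero j h := by
    rw [eval_sub, eval_X, eval_C, sub_eq_zero] at h
    apply hs1
    rw [← (Field.primitive_element_iff_minpoly_natDegree_eq F α).1 hα, ← h]
    simp [minpoly.eq_X_sub_C]
  natDegree_curve_le z r hr := by
    have hr' : r.natDegree ≤ t - 1 := by
      have := mem_degreeLT.1 hr
      by_cases h0 : r = 0
      · simp [h0]
      · have := (natDegree_lt_iff_degree_lt h0).2 this
        omega
    have h1 : ((X - C α) * r).natDegree ≤ 1 + (t - 1) :=
      natDegree_mul_le_of_le (natDegree_X_sub_C_le α) hr'
    refine natDegree_add_le_of_degree_le ?_ (h1.trans (by omega))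
    simp
  extract_prod S z r _ _ := by
    simp [leval_apply, eval_prod]
  extract_eq_zero G hG h :=
    eval_eq_zero_of_coeffMap φ hφ α hα lam hlam G (by omega) h

/-- The case `k = d t + 1`: here the field may have only `k` elements, all of them evaluation
points, so the secret is placed at infinity, that is, in the leading coefficient of the curve. -/
noncomputable def CurveScheme.atInfinity {d t k : ℕ} {F : Type} [Field F]
    (hs : d * t + 1 = k) (lam : Fin k → F) (hlam : Function.Injective lam) :
    CurveScheme d t k F F where
  pt := lam
  a := X ^ t
  b := 1
  proj _ := AddMonoidHom.id F
  extract := lcoeff F (d * t)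
  pt_injective := hlam
  b_ne_zero j := by simp
  natDegree_curve_le z r hr := by
    refine natDegree_add_le_of_degree_le (natDegree_C_mul_X_pow_le z t) ?_
    rw [one_mul]
    exact natDegree_le_of_degree_le (mem_degreeLT.1 hr).le
  extract_prod S z r hS hr := by
    rw [lcoeff_apply, ← hS, coeff_prod_of_natDegree_le]
    · refine Finset.prod_congr rfl fun x _ => ?_
      simp [coeff_eq_zero_of_degree_lt (mem_degreeLT.1 (hr x))]
    · intro x _
      refine natDegree_add_le_of_degree_le (natDegree_C_mul_X_pow_le _ t) ?_
      rw [one_mul]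
      exact natDegree_le_of_degree_le (mem_degreeLT.1 (hr x)).le
  extract_eq_zero G hG h := by
    have : G = 0 := eq_zero_of_natDegree_lt_card_of_eval_eq_zero G hlam h
      (by rw [Fintype.card_fin]; omega)
    simp [this]

lemma exists_curveScheme (d t k : ℕ) (hd : 0 < d) (ht : 0 < t) (hk : d * t + 1 ≤ k) :
    ∃ (F E : Type) (_ : AddCommGroup F) (_ : Field E) (_ : CurveScheme d t k F E),
      Nat.card F = 2 ^ Nat.clog 2 k ∧ Nat.card E = 2 ^ ((k - d * t) * Nat.clog 2 k) := by
  have hdt : 0 < d * t := Nat.mul_pos hd ht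
  have hl : Nat.clog 2 k ≠ 0 := (Nat.clog_pos (by norm_num) (by omega)).ne'
  let F := GaloisField 2 (Nat.clog 2 k)
  have hF : Nat.card F = 2 ^ Nat.clog 2 k := GaloisField.card 2 _ hl
  have : Fintype F := Fintype.ofFinite F
  obtain ⟨lam⟩ : Nonempty (Fin k ↪ F) := by
    apply Function.Embedding.nonempty_of_card_le
    rw [Fintype.card_fin, ← Nat.card_eq_fintype_card, hF]
    exact Nat.le_pow_clog (by norm_num) k
  by_cases h1 : k = d * t + 1
  · refine ⟨F, F, inferInstance, inferInstance,
      CurveScheme.atInfinity h1.symm lam lam.injective, hF, ?_⟩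
    rw [hF, show k - d * t = 1 by omega, one_mul]
  · have : NeZero (k - d * t) := ⟨by omega⟩
    let E := FiniteField.Extension F 2 (k - d * t)
    have hfr : Module.finrank F E = k - d * t := FiniteField.finrank_extension F 2 _
    obtain ⟨α, hα⟩ := Field.exists_primitive_element_of_finite_top F E
    obtain ⟨φ, hφ⟩ := exists_ne (0 : Module.Dual F E)
    refine ⟨F, E, inferInstance, inferInstance,
      CurveScheme.ofExtension ht (by omega) (by omega) lam lam.injective α hα φ hφ, hF, ?_⟩
    rw [FiniteField.natCard_extension, hF, ← pow_mul, mul_comm]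

/-! ### The protocol -/

section Protocol

variable {d t k N m w : ℕ} {F E : Type} [AddCommGroup F] [Field E]

/-- The share of server `j` when the record indexed by the set `S` is requested: the value at
`pt j` of the curve hiding the indicator vector of `S`. -/
noncomputable def share (P : CurveScheme d t k F E) (S : Finset (Fin m))
    (r : Fin m → degreeLT E t) (j : Fin k) (x : Fin m) : E :=
  (C (if x ∈ S then 1 else 0) * P.a + P.b * (r x : E[X])).eval (P.pt j)

/-- The answer of server `j` to the query `y`: each of the `w` coordinates of the database is
encoded as the form `∑ i, D i ∏ x ∈ S i, y x`, evaluated and compressed. -/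
noncomputable def reply (P : CurveScheme d t k F E) (S : Fin N → Finset (Fin m)) (j : Fin k)
    (D : Fin N → Fin w → E) (y : Fin m → E) : Fin w → F :=
  fun c => P.proj j (∑ i, D i c * ∏ x ∈ S i, y x)

/-- The answers determine the requested record: by additivity the difference of two databases with
the same answers has zero answers, so its form vanishes at the indicator vector of `S i`. -/
lemma eq_of_reply_eq (P : CurveScheme d t k F E) (S : Fin N → Finset (Fin m))
    (hS : Function.Injective S) (hcard : ∀ i, (S i).card = d) (i : Fin N)
    (r : Fin m → degreeLT E t) (D D' : Fin N → Fin w → E)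
    (h : ∀ j, reply P S j D (share P (S i) r j) = reply P S j D' (share P (S i) r j)) :
    D i = D' i := by
  funext c
  let f : Fin m → E[X] := fun x => C (if x ∈ S i then 1 else 0) * P.a + P.b * (r x : E[X])
  let G : E[X] := ∑ l, C (D l c - D' l c) * ∏ x ∈ S l, f x
  have hG : G.natDegree ≤ d * t := by
    refine natDegree_sum_le_of_forall_le _ _ fun l _ => ?_
    refine (natDegree_C_mul_le _ _).trans ((natDegree_prod_le _ _).trans ?_)
    refine (Finset.sum_le_card_nsmul _ _ t fun x _ => P.natDegree_curve_le _ _ (r x).2).trans ?_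
    rw [hcard, smul_eq_mul]
  have h0 : P.extract G = 0 := by
    refine P.extract_eq_zero G hG fun j => ?_
    have hj : P.proj j (∑ l, D l c * ∏ x ∈ S l, share P (S i) r j x)
      = P.proj j (∑ l, D' l c * ∏ x ∈ S l, share P (S i) r j x) := congrFun (h j) c
    rw [← sub_eq_zero, ← map_sub, ← Finset.sum_sub_distrib] at hj
    rw [← hj, eval_finsetSum]
    congr 1
    refine Finset.sum_congr rfl fun l _ => ?_
    rw [eval_mul, eval_C, eval_prod, sub_mul]
    rfl
  have h1 : P.extract G = D i c - D' i c := by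
    rw [map_sum, Finset.sum_eq_single i]
    · rw [← smul_eq_C_mul, map_smul, P.extract_prod _ _ _ (hcard i) fun x => (r x).2,
        Finset.prod_congr rfl fun x hx => if_pos hx]
      simp
    · intro l _ hl
      -- two distinct `d`-sets are incomparable, so some variable of the monomial is set to zero
      have : ¬ S l ⊆ S i := fun hsub =>
        hl (hS (Finset.eq_of_subset_of_card_le hsub (by rw [hcard, hcard])))
      obtain ⟨x, hx, hx'⟩ := Finset.not_subset.1 this
      rw [← smul_eq_C_mul, map_smul, P.extract_prod _ _ _ (hcard l) fun x => (r x).2,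
        Finset.prod_eq_zero hx (if_neg hx'), smul_zero]
    · simp
  exact sub_eq_zero.1 (h1.symm.trans h0)

/-- Shifting the randomness by a suitable interpolation polynomial of degree `< t` turns the
shares of one request into those of another for any given `t` servers. -/
lemma exists_shift (P : CurveScheme d t k F E) (S S' : Finset (Fin m)) (T : Finset (Fin k))
    (hT : T.card ≤ t) :
    ∃ δ : Fin m → degreeLT E t, ∀ r, ∀ j ∈ T, share P S' (r + δ) j = share P S r j := by
  let g : Fin m → E[X] := fun x => Lagrange.interpolate T P.pt fun j =>
    ((if x ∈ S then 1 else 0) - (if x ∈ S' then 1 else 0)) * P.a.eval (P.pt j) /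
      P.b.eval (P.pt j)
  have hinj : Set.InjOn P.pt T := P.pt_injective.injOn
  refine ⟨fun x => ⟨g x, mem_degreeLT.2 ?_⟩, fun r j hj => ?_⟩
  · exact (Lagrange.degree_interpolate_lt _ hinj).trans_le (by exact_mod_cast hT)
  · funext x
    have hb := P.b_ne_zero j
    have hg : (g x).eval (P.pt j) = _ := Lagrange.eval_interpolate_at_node _ hinj hj
    simp only [share, eval_add, eval_mul, eval_C, Pi.add_apply, Submodule.coe_add, hg]
    field_simp
    ring

end Protocol

lemma nonempty_equiv_bits {A : Type} {n : ℕ} (h : Nat.card A = 2 ^ n) :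
    Nonempty (A ≃ (Fin n → Bool)) := by
  have : Finite A := Nat.finite_of_card_ne_zero (by rw [h]; positivity)
  exact (Finite.card_eq (α := A) (β := Fin n → Bool)).1 (by simp [h])

end HighRatePIR

open HighRatePIR Polynomial

/-- **PIR with sublinear upload cost and high download rate.**
For all positive integers `d, t, k, w` with `dt + 1 ≤ k`, there is a `t`-private `k`-server
PIR protocol for databases of `N` records, each record a string of
`w·(k−dt)·⌈log₂ k⌉` bits, with download cost exactly `w·k·⌈log₂ k⌉` bits (hence download
rate `1 − dt/k`) and total upload cost at most `k·m·(k−dt)²·⌈log₂ k⌉` bits, where `m` is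
the smallest positive integer with `N ≤ binom(m,d)`.  The protocol consists of a
randomized query algorithm (randomness uniform over `Fin ρ`), local answer functions, and
a reconstruction function; correctness holds for every database, index and randomness,
and `t`-privacy says any `≤ t` servers' queries are identically distributed for all
retrieved indices. -/
theorem pir_sublinear_upload_high_rate (d t k w N : ℕ)
    (hd : 0 < d) (ht : 0 < t) (hw : 0 < w) (hN : 0 < N) (hk : d * t + 1 ≤ k)
    (m : ℕ) (hm : 0 < m) (hmN : N ≤ m.choose d)
    (hmin : ∀ m' : ℕ, 0 < m' → N ≤ m'.choose d → m ≤ m') :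
    ∃ (ρ : ℕ) (u β : Fin k → ℕ)
      (query : Fin N → Fin ρ → ∀ j : Fin k, Fin (u j) → Bool)
      (answer : ∀ j : Fin k,
        (Fin N → Fin (w * (k - d * t) * Nat.clog 2 k) → Bool) →
        (Fin (u j) → Bool) → (Fin (β j) → Bool))
      (recon : Fin N → Fin ρ → (∀ j : Fin k, Fin (β j) → Bool) →
        (Fin (w * (k - d * t) * Nat.clog 2 k) → Bool)),
      0 < ρ ∧
      -- correctness: the client always recovers the requested record
      (∀ (D : Fin N → Fin (w * (k - d * t) * Nat.clog 2 k) → Bool) (i : Fin N) (r : Fin ρ),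
        recon i r (fun j => answer j D (query i r j)) = D i) ∧
      -- t-privacy: the joint queries of any ≤ t servers are identically distributed
      (∀ T : Finset (Fin k), T.card ≤ t → ∀ i i' : Fin N,
        ∀ v : ∀ j : ↥T, Fin (u j.1) → Bool,
          Nat.card {r : Fin ρ // (fun j : ↥T => query i r j.1) = v} =
            Nat.card {r : Fin ρ // (fun j : ↥T => query i' r j.1) = v}) ∧
      -- upload cost
      (∑ j, u j ≤ k * m * (k - d * t) ^ 2 * Nat.clog 2 k) ∧
      -- download cost
      (∑ j, β j = w * k * Nat.clog 2 k) := by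
  classical
  obtain ⟨F, E, _, _, P, hF, hE⟩ := exists_curveScheme d t k hd ht hk
  have : Finite E := Nat.finite_of_card_ne_zero (by rw [hE]; positivity)
  obtain ⟨S⟩ : Nonempty (Fin N ↪ Finset.powersetCard d (Finset.univ : Finset (Fin m))) := by
    apply Function.Embedding.nonempty_of_card_le
    simpa using hmN
  let S' : Fin N → Finset (Fin m) := fun i => (S i).1
  have hS' : Function.Injective S' := Subtype.val_injective.comp S.injective
  have hcard : ∀ i, (S' i).card = d := fun i => (Finset.mem_powersetCard.1 (S i).2).2
  -- identify records, queries and answers with bit strings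
  obtain ⟨eD⟩ : Nonempty ((Fin w → E) ≃ (Fin (w * (k - d * t) * Nat.clog 2 k) → Bool)) :=
    nonempty_equiv_bits (by rw [Nat.card_fun, hE, ← pow_mul, Nat.card_fin]; congr 1; ring)
  obtain ⟨eQ⟩ : Nonempty ((Fin m → E) ≃ (Fin (m * (k - d * t) * Nat.clog 2 k) → Bool)) :=
    nonempty_equiv_bits (by rw [Nat.card_fun, hE, ← pow_mul, Nat.card_fin]; congr 1; ring)
  obtain ⟨eA⟩ : Nonempty ((Fin w → F) ≃ (Fin (w * Nat.clog 2 k) → Bool)) :=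
    nonempty_equiv_bits (by rw [Nat.card_fun, hF, ← pow_mul, Nat.card_fin]; congr 1; ring)
  have : Finite (degreeLT E t) := Finite.of_equiv _ (degreeLTEquiv E t).symm.toEquiv
  let eR : (Fin m → degreeLT E t) ≃ Fin (Nat.card (Fin m → degreeLT E t)) := Finite.equivFin _
  let query : Fin N → Fin (Nat.card (Fin m → degreeLT E t)) → Fin k →
      Fin (m * (k - d * t) * Nat.clog 2 k) → Bool :=
    fun i r j => eQ (share P (S' i) (eR.symm r) j)
  let answer : Fin k → (Fin N → Fin (w * (k - d * t) * Nat.clog 2 k) → Bool) →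
      (Fin (m * (k - d * t) * Nat.clog 2 k) → Bool) → Fin (w * Nat.clog 2 k) → Bool :=
    fun j D q => eA (reply P S' j (fun i => eD.symm (D i)) (eQ.symm q))
  -- reconstruction outputs the record of any database consistent with the answers
  refine ⟨_, fun _ => m * (k - d * t) * Nat.clog 2 k, fun _ => w * Nat.clog 2 k, query, answer,
    fun i r ans => if h : ∃ D, (fun j => answer j D (query i r j)) = ans
      then h.choose i else fun _ => false, Nat.card_pos, ?_, ?_, ?_, ?_⟩
  · intro D i r
    have hex : ∃ D', (fun j => answer j D' (query i r j)) =
        fun j => answer j D (query i r j) := ⟨D, rfl⟩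
    beta_reduce
    rw [dif_pos hex]
    have hspec := hex.choose_spec
    generalize hex.choose = D' at hspec
    apply eD.symm.injective
    refine eq_of_reply_eq P S' hS' hcard i (eR.symm r) (fun l => eD.symm (D' l))
      (fun l => eD.symm (D l)) fun j => ?_
    have := congrFun hspec j
    simpa [answer, query] using this
  · intro T hT i i' v
    obtain ⟨δ, hδ⟩ := exists_shift P (S' i) (S' i') T hT
    refine Nat.card_congr (Equiv.subtypeEquiv (eR.symm.trans ((Equiv.addRight δ).trans eR))
      fun r => ?_)
    have : (fun j : T => query i' ((eR.symm.trans ((Equiv.addRight δ).trans eR)) r) j.1)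
        = fun j : T => query i r j.1 := by
      funext j
      simp [query, hδ _ j.1 j.2]
    rw [this]
  · rw [Finset.sum_const, Finset.card_univ, Fintype.card_fin, smul_eq_mul]
    have : k - d * t ≤ (k - d * t) ^ 2 := Nat.le_self_pow (by norm_num) _
    calc k * (m * (k - d * t) * Nat.clog 2 k) = k * m * (k - d * t) * Nat.clog 2 k := by ring
      _ ≤ k * m * (k - d * t) ^ 2 * Nat.clog 2 k := by gcongr
  · rw [Finset.sum_const, Finset.card_univ, Fintype.card_fin, smul_eq_mul]
    ring
end

section
/- Let t, k, d, m, ℓ be positive integers with m ≥ d and let F be a finite field. Let Π be a t-private k-server linear HSS for POLY_{d,m}(F)^ℓ, i.e.: an F-linear sharing map Share : F × F^e → F^{c_1} × ⋯ × F^{c_k} applied independently to each of the ℓm inputs; arbitrary evaluation functions Eval_j mapping (f_1,…,f_ℓ) ∈ POLY_{d,m}(F)^ℓ and server j's input shares to F^{b_j}; and, for each tuple (f_1,…,f_ℓ), an F-linear reconstruction map Rec : F^{b_1} × ⋯ × F^{b_k} → F^ℓ, such that for all function tuples, all inputs, and all sharing randomness, Rec of the k output shares equals (f_1(x_1),…,f_ℓ(x_ℓ)),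 and such that for every T ⊆ [k] with |T| ≤ t the joint distribution of the T-servers' shares of any single input is independent of that input. Then dt < k, and the download cost satisfies b_1 + ⋯ + b_k ≥ kℓ/(k − dt) field elements (i.e., at least kℓ·log₂|F|/(k−dt) bits); consequently the download rate of Π is at most 1 − dt/k. -/
/-!
Evaluate the monomial `x_1 ⋯ x_d` in each of the `ℓ` slots. The heart of the proof is that the
servers outside any set `S` of at most `d * t` servers must send at least `ℓ` field elements in
total (`hss_outside_download`).

Split `S` into `d` classes `T_q` of size at most `t`. By privacy, and since the zero sharing is a
sharing of `0`, there is a sharing of `1` for which all servers in `T_q` receive zero shares. For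
`A ⊆ [d]`, share the indicator vector of `A` in one slot `i`, using this special sharing for the
inputs in `A` and the zero sharing for all other inputs. The alternating sum over `A` of the
resulting vectors of output shares vanishes at every server of `S`: a server in `T_q` cannot see
whether `q ∈ A`, so its terms cancel in pairs (`sum_neg_one_pow_card_eq_zero`). The linear
reconstruction sends this alternating sum to `±` the `i`-th standard basis vector. Hence
reconstruction restricted to vectors vanishing on `S` is onto `F^ℓ`, which bounds the dimension.

Taking `S` to be everything rules out `k ≤ d * t`, and averaging over all `S` of size `d * t` gives
the bound on the total download.
-/

open scoped BigOperators

/-- An alternating sum over subsets vanishes if the summand ignores membership of some `q`. -/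
lemma sum_neg_one_pow_card_eq_zero {F M ι : Type*} [Field F] [AddCommGroup M] [Module F M]
    [Fintype ι] [DecidableEq ι] (q : ι) (g : Finset ι → M)
    (hg : ∀ A, g (insert q A) = g (A.erase q)) :
    ∑ A : Finset ι, (-1 : F) ^ A.card • g A = 0 := by
  have huniv : (Finset.univ : Finset (Finset ι)) =
      (insert q (Finset.univ.erase q)).powerset := by
    rw [Finset.insert_erase (Finset.mem_univ q)]; simp
  rw [huniv, Finset.sum_powerset_insert (Finset.notMem_erase q _), ← Finset.sum_add_distrib]
  refine Finset.sum_eq_zero fun A hA => ?_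
  have hq : q ∉ A := fun h => by
    simpa using Finset.mem_powerset.1 hA h
  rw [hg A, Finset.erase_eq_of_notMem hq, Finset.card_insert_of_notMem hq, pow_succ]
  simp

lemma exists_coloring_card_le {α : Type*} [DecidableEq α] (S : Finset α) (d t : ℕ) (hd : 0 < d)
    (hS : S.card ≤ d * t) :
    ∃ col : α → Fin d, ∀ q, (S.filter (fun j => col j = q)).card ≤ t := by
  obtain ⟨φ⟩ : Nonempty (S ↪ Fin d × Fin t) :=
    Function.Embedding.nonempty_of_card_le (by simpa using hS)
  refine ⟨fun j => if h : j ∈ S then (φ ⟨j, h⟩).1 else ⟨0, hd⟩, fun q => ?_⟩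
  set U := S.filter (fun j => (if h : j ∈ S then (φ ⟨j, h⟩).1 else ⟨0, hd⟩) = q) with hU
  have hmem : ∀ j : U, j.1 ∈ S := fun j => (Finset.mem_filter.1 j.2).1
  have hcol : ∀ j : U, (φ ⟨j.1, hmem j⟩).1 = q := fun j => by
    have := (Finset.mem_filter.1 j.2).2
    rwa [dif_pos (hmem j)] at this
  have hinj : Function.Injective (fun j : U => (φ ⟨j.1, hmem j⟩).2) := by
    intro j j' h
    have h1 := φ.injective (Prod.ext ((hcol j).trans (hcol j').symm) h)
    exact Subtype.ext (congrArg (fun x : S => x.1) h1)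
  simpa using Fintype.card_le_of_injective _ hinj

/-- Averaging over all `n`-subsets: if every complement of an `n`-subset has weight at least `l`,
then the total weight `w` satisfies `k * l ≤ (k - n) * w`. -/
lemma mul_le_of_forall_compl (k n l : ℕ) (hn : n < k) (b : Fin k → ℕ)
    (h : ∀ S : Finset (Fin k), S.card = n → l ≤ ∑ j ∈ Sᶜ, b j) :
    k * l ≤ (k - n) * ∑ j, b j := by
  have h1 : k.choose n * l ≤ ∑ S ∈ Finset.powersetCard n (Finset.univ : Finset (Fin k)),
      ∑ j ∈ Sᶜ, b j := by
    calc k.choose n * l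
        = ∑ S ∈ Finset.powersetCard n (Finset.univ : Finset (Fin k)), l := by simp
      _ ≤ _ := Finset.sum_le_sum fun S hS => h S (Finset.mem_powersetCard.1 hS).2
  have h2 : ∑ S ∈ Finset.powersetCard n (Finset.univ : Finset (Fin k)), ∑ j ∈ Sᶜ, b j
      = (k - 1).choose n * ∑ j, b j := by
    rw [Finset.sum_comm' (t' := Finset.univ)
      (s' := fun j => Finset.powersetCard n (Finset.univ.erase j))]
    · simp [Finset.mul_sum, Finset.card_erase_of_mem]
    · intro S j
      simp only [Finset.mem_powersetCard, Finset.subset_univ, true_and, Finset.mem_compl,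
        Finset.mem_univ, and_true, Finset.subset_erase]
      tauto
  rw [h2] at h1
  obtain ⟨k, rfl⟩ : ∃ k', k = k' + 1 := ⟨k - 1, by omega⟩
  have h3 := Nat.choose_mul_succ_eq k n
  simp only [Nat.add_sub_cancel] at h1
  have hpos : 0 < k.choose n := Nat.choose_pos (by omega)
  refine Nat.le_of_mul_le_mul_left (c := k.choose n) ?_ hpos
  calc k.choose n * ((k + 1) * l) = (k + 1 - n) * ((k + 1).choose n * l) := by
        rw [← mul_assoc, h3]; ring
    _ ≤ (k + 1 - n) * (k.choose n * ∑ j, b j) := Nat.mul_le_mul_left _ h1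
    _ = _ := by ring

/-- If every standard basis vector is the image under `R` of a vector supported outside `S`, the
coordinates outside `S` number at least `ℓ`. -/
lemma le_sum_compl_of_preimages {F : Type*} [Field F] {k ℓ : ℕ} (b : Fin k → ℕ)
    (R : (∀ j : Fin k, Fin (b j) → F) →ₗ[F] (Fin ℓ → F)) (S : Finset (Fin k))
    (h : ∀ i : Fin ℓ, ∃ z, (∀ j ∈ S, z j = 0) ∧ R z = Pi.single i 1) :
    ℓ ≤ ∑ j ∈ Sᶜ, b j := by
  classical
  -- Extension by zero from the coordinates outside `S`.
  let E : (∀ j : ↥Sᶜ, Fin (b j.1) → F) →ₗ[F] (∀ j : Fin k, Fin (b j) → F) :=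
    LinearMap.pi fun j => if hj : j ∈ Sᶜ then LinearMap.proj (⟨j, hj⟩ : ↥Sᶜ) else 0
  have hE : ∀ z : (∀ j : Fin k, Fin (b j) → F), (∀ j ∈ S, z j = 0) →
      E (fun j => z j.1) = z := by
    intro z hz
    funext j
    by_cases hj : j ∈ S
    · simp [E, hj, hz j hj]
    · simp [E, hj]
  have hsurj : Function.Surjective (R ∘ₗ E) := by
    intro y
    choose z hz hzR using h
    refine ⟨∑ i, y i • (fun j : ↥Sᶜ => z i j.1), ?_⟩
    rw [map_sum]
    simp only [map_smul, LinearMap.comp_apply, hE _ (hz _), hzR]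
    funext i
    simp [Finset.sum_apply, Pi.single_apply]
  have hfin := LinearMap.finrank_le_finrank_of_surjective hsurj
  rw [Module.finrank_fin_fun, Module.finrank_pi_fintype] at hfin
  simp only [Module.finrank_fin_fun] at hfin
  rwa [Finset.sum_coe_sort Sᶜ b] at hfin

/-- The servers outside any set of at most `d * t` servers send at least `ℓ` field elements. -/
lemma hss_outside_download (F : Type) [Field F] [Fintype F]
    (t k d m ℓ : ℕ) (hd : 0 < d) (hmd : d ≤ m)
    (e : ℕ) (c : Fin k → ℕ) (b : Fin k → ℕ)
    (Share : (F × (Fin e → F)) →ₗ[F] (∀ j : Fin k, Fin (c j) → F))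
    (Eval : ∀ j : Fin k,
      (Fin ℓ → {f : MvPolynomial (Fin m) F // f.totalDegree ≤ d}) →
      (Fin ℓ → Fin m → (Fin (c j) → F)) → (Fin (b j) → F))
    (Rec : (Fin ℓ → {f : MvPolynomial (Fin m) F // f.totalDegree ≤ d}) →
      ((∀ j : Fin k, Fin (b j) → F) →ₗ[F] (Fin ℓ → F)))
    (hcorrect : ∀ (f : Fin ℓ → {f : MvPolynomial (Fin m) F // f.totalDegree ≤ d})
      (x : Fin ℓ → Fin m → F) (r : Fin ℓ → Fin m → (Fin e → F)),
      Rec f (fun j => Eval j f (fun i q => Share (x i q, r i q) j)) =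
        fun i => MvPolynomial.eval (x i) (f i).1)
    (hpriv : ∀ T : Finset (Fin k), T.card ≤ t → ∀ x x' : F,
      ∀ v : ∀ j : ↥T, Fin (c j.1) → F,
        Nat.card {r : Fin e → F // (fun j : ↥T => Share (x, r) j.1) = v} =
          Nat.card {r : Fin e → F // (fun j : ↥T => Share (x', r) j.1) = v})
    (S : Finset (Fin k)) (hS : S.card ≤ d * t) :
    ℓ ≤ ∑ j ∈ Sᶜ, b j := by
  classical
  obtain ⟨col, hcol⟩ := exists_coloring_card_le S d t hd hS
  -- Sharings of `1` invisible to the servers of a given colour.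
  have hone : ∀ q : Fin d, ∃ r : Fin e → F, ∀ j ∈ S, col j = q → Share (1, r) j = 0 := by
    intro q
    have hcard := hpriv _ (hcol q) 0 1 0
    have hne : Nonempty {r : Fin e → F //
        (fun j : ↥(S.filter (fun j => col j = q)) => Share ((0 : F), r) j.1) = 0} :=
      ⟨⟨0, by
        have h0 : ((0 : F), (0 : Fin e → F)) = 0 := rfl
        rw [h0, map_zero]; rfl⟩⟩
    have hpos := Nat.card_pos (α := {r : Fin e → F //
        (fun j : ↥(S.filter (fun j => col j = q)) => Share ((0 : F), r) j.1) = 0})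
    rw [hcard] at hpos
    obtain ⟨⟨r, hr⟩⟩ := (Nat.card_pos_iff.1 hpos).1
    exact ⟨r, fun j hj hjq =>
      congrFun hr ⟨j, Finset.mem_filter.2 ⟨hj, hjq⟩⟩⟩
  choose ρ hρ using hone
  let mon : {f : MvPolynomial (Fin m) F // f.totalDegree ≤ d} :=
    ⟨∏ q : Fin d, MvPolynomial.X (Fin.castLE hmd q), by
      refine (MvPolynomial.totalDegree_finsetProd _ _).trans ?_
      simp [MvPolynomial.totalDegree_X]⟩
  let f : Fin ℓ → {f : MvPolynomial (Fin m) F // f.totalDegree ≤ d} := fun _ => mon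
  refine le_sum_compl_of_preimages b (Rec f) S fun i₀ => ?_
  -- Value and randomness of each input: nonzero only in slot `i₀`, at positions indexed by `A`.
  let inp : Finset (Fin d) → Fin ℓ → Fin m → F × (Fin e → F) := fun A i p =>
    if h : p.1 < d then if i = i₀ ∧ (⟨p.1, h⟩ : Fin d) ∈ A then (1, ρ ⟨p.1, h⟩) else 0 else 0
  let y : Finset (Fin d) → ∀ j : Fin k, Fin (b j) → F := fun A j =>
    Eval j f (fun i p => Share (inp A i p) j)
  have hy : ∀ A, Rec f (y A) = if A = Finset.univ then Pi.single i₀ 1 else 0 := by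
    intro A
    have hc := hcorrect f (fun i p => (inp A i p).1) (fun i p => (inp A i p).2)
    refine Eq.trans hc ?_
    have hval : ∀ i, MvPolynomial.eval (fun p => (inp A i p).1) (f i).1 =
        ∏ q : Fin d, if i = i₀ ∧ q ∈ A then (1 : F) else 0 := by
      intro i
      simp only [f, mon, map_prod, MvPolynomial.eval_X]
      refine Finset.prod_congr rfl fun q _ => ?_
      simp only [inp, Fin.val_castLE, q.2, dite_true]
      split_ifs <;> rfl
    funext i
    rw [hval]
    by_cases hi : i = i₀
    · subst hi
      by_cases hA : A = Finset.univ
      · simp [hA]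
      · obtain ⟨q, hq⟩ : ∃ q, q ∉ A := by
          by_contra! hall
          exact hA (Finset.eq_univ_iff_forall.2 hall)
        rw [if_neg hA]
        exact Finset.prod_eq_zero (Finset.mem_univ q) (by simp [hq])
    · rw [Finset.prod_eq_zero (Finset.mem_univ ⟨0, hd⟩) (by simp [hi])]
      split_ifs <;> simp [hi]
  refine ⟨(-1 : F) ^ d • ∑ A : Finset (Fin d), (-1 : F) ^ A.card • y A, fun j hj => ?_, ?_⟩
  · have hzero : ∑ A : Finset (Fin d), (-1 : F) ^ A.card • y A j = 0 := by
      refine sum_neg_one_pow_card_eq_zero (col j) (fun A => y A j) fun A => ?_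
      simp only [y]
      congr 1
      funext i p
      simp only [inp]
      by_cases hp : p.1 < d
      · simp only [hp, dite_true]
        by_cases hq : (⟨p.1, hp⟩ : Fin d) = col j
        · have hsh : Share (1, ρ (col j)) j = 0 := hρ _ j hj rfl
          rw [hq]
          split_ifs <;> simp [hsh]
        · simp [Finset.mem_insert, Finset.mem_erase, hq]
      · simp [hp]
    simp only [Pi.smul_apply, Finset.sum_apply]
    rw [hzero, smul_zero]
  · simp only [map_smul, map_sum, hy]
    rw [Finset.sum_eq_single Finset.univ]
    · simp [smul_smul, ← mul_pow]
    · intro A _ hA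
      simp [hA]
    · simp

/-- **Download lower bound for linear HSS for low-degree polynomials.**
Let `Π` be a `t`-private `k`-server linear HSS for `POLY_{d,m}(F)^ℓ` (with `m ≥ d`): an
`F`-linear sharing map applied independently to each of the `ℓm` inputs, arbitrary
evaluation functions producing `b_j` field elements for server `j`, and for each tuple of
polynomials an `F`-linear reconstruction map, with perfect correctness and perfect
`t`-privacy.  Then `dt < k` and the download cost satisfies
`b_1 + ⋯ + b_k ≥ kℓ/(k − dt)` field elements; in particular the download rate is at most
`1 − dt/k`. -/
theorem linear_hss_download_lower_bound (F : Type) [Field F] [Fintype F]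
    (t k d m ℓ : ℕ) (ht : 0 < t) (hk : 0 < k) (hd : 0 < d) (hℓ : 0 < ℓ) (hmd : d ≤ m)
    (e : ℕ) (c : Fin k → ℕ) (b : Fin k → ℕ)
    (Share : (F × (Fin e → F)) →ₗ[F] (∀ j : Fin k, Fin (c j) → F))
    (Eval : ∀ j : Fin k,
      (Fin ℓ → {f : MvPolynomial (Fin m) F // f.totalDegree ≤ d}) →
      (Fin ℓ → Fin m → (Fin (c j) → F)) → (Fin (b j) → F))
    (Rec : (Fin ℓ → {f : MvPolynomial (Fin m) F // f.totalDegree ≤ d}) →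
      ((∀ j : Fin k, Fin (b j) → F) →ₗ[F] (Fin ℓ → F)))
    (hcorrect : ∀ (f : Fin ℓ → {f : MvPolynomial (Fin m) F // f.totalDegree ≤ d})
      (x : Fin ℓ → Fin m → F) (r : Fin ℓ → Fin m → (Fin e → F)),
      Rec f (fun j => Eval j f (fun i q => Share (x i q, r i q) j)) =
        fun i => MvPolynomial.eval (x i) (f i).1)
    (hpriv : ∀ T : Finset (Fin k), T.card ≤ t → ∀ x x' : F,
      ∀ v : ∀ j : ↥T, Fin (c j.1) → F,
        Nat.card {r : Fin e → F // (fun j : ↥T => Share (x, r) j.1) = v} =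
          Nat.card {r : Fin e → F // (fun j : ↥T => Share (x', r) j.1) = v}) :
    d * t < k ∧
      ((k : ℚ) * (ℓ : ℚ)) / ((k : ℚ) - (d : ℚ) * (t : ℚ)) ≤ ∑ j, (b j : ℚ) := by
  have key := hss_outside_download F t k d m ℓ hd hmd e c b Share Eval Rec hcorrect hpriv
  have hlt : d * t < k := by
    by_contra! hle
    have := key Finset.univ (by simpa using hle)
    simp at this
    omega
  refine ⟨hlt, ?_⟩
  have havg := mul_le_of_forall_compl k (d * t) ℓ hlt b fun S hS => key S hS.le
  have hltQ : (d : ℚ) * t < k := by exact_mod_cast hlt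
  rw [div_le_iff₀ (by linarith)]
  have havgQ : (k : ℚ) * ℓ ≤ ((k - d * t : ℕ) : ℚ) * ∑ j, (b j : ℚ) := by exact_mod_cast havg
  rw [Nat.cast_sub hlt.le, Nat.cast_mul] at havgQ
  linarith
end

section
/- Let F be a field, let d, t, k, ℓ be positive integers with ℓ ≥ 1 and t ≤ k, and let b_1 ≤ b_2 ≤ ⋯ ≤ b_k be non-negative integers. Consider the multivariate polynomial ring over F in the variables X_{i,r,S}, indexed by i ∈ [d], r ∈ [ℓ], and t-element subsets S ⊆ [k]. Suppose that for each j ∈ [k] there are polynomials p^{(j)}_1, …, p^{(j)}_{b_j} in this ring, each involving only variables X_{i,r,S} with j ∉ S, and that for each r ∈ [ℓ] there are scalars v^{(j)}_{r,h} ∈ F with Σ_{j=1}^k Σ_{h=1}^{b_j} v^{(j)}_{r,h} · p^{(j)}_h = Σ_{(S_1,…,S_d)} ∏_{i=1}^d X_{i,r,S_i}, where the sum on the right is over all d-tuples of t-element subsets S_1,…,S_d ⊆ [k]. Then dt < k and ℓ ≤ b_1 + b_2 + ⋯ + b_{k−dt}. -/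
/-!
Choose `t`-subsets `S_1, …, S_d` of the servers that together contain the last `dt` servers (all
servers, if `k ≤ dt`), and let `m_r = ∏_i X (i, r, S_i)`. A server `j` lying in some `S_i` does not
see one of the variables of `m_r`, so `m_r` does not occur in any of its outputs. Comparing the
coefficients of `m_{r'}` in the reconstruction identity for `r` therefore gives `V * P = 1`, where
the `ℓ` rows of `V` are the reconstruction scalars and the columns of `P` are the coefficients of
the `m_{r'}`, both restricted to the outputs of the servers `j < k - dt`. Comparing ranks, `ℓ` is at
most the number of those outputs. If `k ≤ dt` this number is `0`, contradicting `0 < ℓ`, so the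
same inequality also yields `dt < k`.
-/

/-- The last `d * t` elements of `Fin k` (all of them if `k ≤ d * t`) are covered by `d` sets of
size `t`. -/
lemma exists_cover (d t k : ℕ) (ht : 0 < t) (htk : t ≤ k) :
    ∃ S : Fin d → {S : Finset (Fin k) // S.card = t},
      ∀ j : Fin k, k - d * t ≤ (j : ℕ) → ∃ i, j ∈ (S i).1 := by
  -- The `i`-th set contains the `i`-th block of length `t`, counted from the end; blocks that
  -- run past the start are truncated or empty, and are padded to size `t`.
  have key : ∀ i : Fin d, ∃ S : Finset (Fin k),
      Finset.univ.filter (fun j : Fin k => (k - 1 - (j : ℕ)) / t = i) ⊆ S ∧ S.card = t := by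
    intro i
    apply Finset.exists_superset_card_eq
    · have hmaps : Set.MapsTo (fun j : Fin k => (k - 1 - (j : ℕ)) % t)
          (Finset.univ.filter (fun j : Fin k => (k - 1 - (j : ℕ)) / t = i))
          (Finset.range t) := by
        intro j _
        simpa using Nat.mod_lt _ ht
      have hinj : Set.InjOn (fun j : Fin k => (k - 1 - (j : ℕ)) % t)
          (Finset.univ.filter (fun j : Fin k => (k - 1 - (j : ℕ)) / t = i)) := by
        intro j hj j' hj' hmod
        simp only [Finset.coe_filter, Finset.mem_univ, true_and, Set.mem_ofPred_eq] at hj hj'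
        have h1 := Nat.div_add_mod (k - 1 - (j : ℕ)) t
        have h2 := Nat.div_add_mod (k - 1 - (j' : ℕ)) t
        simp only at hmod
        rw [hj, hmod] at h1
        rw [hj'] at h2
        ext
        have := j.2
        have := j'.2
        omega
      simpa using Finset.card_le_card_of_injOn _ hmaps hinj
    · simpa using htk
  choose S hS hcard using key
  refine ⟨fun i => ⟨S i, hcard i⟩, fun j hj => ?_⟩
  have hlt : (k - 1 - (j : ℕ)) / t < d := by
    rw [Nat.div_lt_iff_lt_mul ht]
    have := j.2
    omega
  exact ⟨⟨_, hlt⟩, hS _ (by simp)⟩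

/-- The exponent vector of the monomial `∏ i, X (i, r, S i)`. -/
noncomputable def blockMonomial {d ℓ : ℕ} {A : Type} (r : Fin ℓ) (S : Fin d → A) :
    (Fin d × Fin ℓ × A) →₀ ℕ :=
  ∑ i, Finsupp.single (i, r, S i) 1

lemma blockMonomial_apply_self {d ℓ : ℕ} {A : Type} (r : Fin ℓ) (S : Fin d → A) (i : Fin d) :
    blockMonomial r S (i, r, S i) ≠ 0 := by
  classical
  simp only [blockMonomial, Finsupp.finsetSum_apply, Finset.sum_eq_zero_iff, ne_eq, not_forall]
  exact ⟨i, Finset.mem_univ i, by simp⟩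

lemma eq_of_blockMonomial_apply_ne {d ℓ : ℕ} {A : Type} (r r' : Fin ℓ) (S : Fin d → A)
    (i : Fin d) (a : A) (h : blockMonomial r S (i, r', a) ≠ 0) : r = r' ∧ S i = a := by
  classical
  simp only [blockMonomial, Finsupp.finsetSum_apply] at h
  obtain ⟨i', -, hi'⟩ := Finset.exists_ne_zero_of_sum_ne_zero h
  have hEq : (i', r, S i') = (i, r', a) := by
    by_contra hne
    exact hi' (Finsupp.single_eq_of_ne (Ne.symm hne))
  simp only [Prod.mk.injEq] at hEq
  obtain ⟨rfl, h1, h2⟩ := hEq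
  exact ⟨h1, h2⟩

lemma blockMonomial_inj {d ℓ : ℕ} (hd : 0 < d) {A : Type} {r r' : Fin ℓ} {S S' : Fin d → A}
    (h : blockMonomial r S = blockMonomial r' S') : r = r' ∧ S = S' := by
  have key : ∀ i, r = r' ∧ S i = S' i := fun i =>
    eq_of_blockMonomial_apply_ne r r' S i (S' i) (h ▸ blockMonomial_apply_self r' S' i)
  exact ⟨(key ⟨0, hd⟩).1, funext fun i => (key i).2⟩

lemma coeff_blockMonomial_sum (F : Type) [Field F] {d ℓ : ℕ} (hd : 0 < d) {A : Type} [Fintype A]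
    (r r' : Fin ℓ) (S₀ : Fin d → A) :
    MvPolynomial.coeff (blockMonomial r' S₀)
      (∑ S : Fin d → A, ∏ i : Fin d, (MvPolynomial.X (i, r, S i) :
        MvPolynomial (Fin d × Fin ℓ × A) F)) = if r = r' then 1 else 0 := by
  classical
  have hprod : ∀ S : Fin d → A, ∏ i : Fin d, (MvPolynomial.X (i, r, S i) :
      MvPolynomial (Fin d × Fin ℓ × A) F) = MvPolynomial.monomial (blockMonomial r S) 1 := by
    intro S
    rw [blockMonomial, MvPolynomial.monomial_sum_one]
    rfl
  simp only [hprod, MvPolynomial.coeff_sum, MvPolynomial.coeff_monomial]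
  split_ifs with hr
  · subst hr
    rw [Finset.sum_eq_single S₀]
    · simp
    · intro S _ hne
      exact if_neg fun h => hne (blockMonomial_inj hd h).2
    · simp
  · exact Finset.sum_eq_zero fun S _ => if_neg fun h => hr (blockMonomial_inj hd h).1

/-- **Algebraic core of the linear-HSS download lower bound.**
Variables `X (i, r, S)` are indexed by `i ∈ [d]`, `r ∈ [ℓ]` and `t`-element subsets
`S ⊆ [k]`.  Suppose server `j` holds polynomials `p j 1, …, p j (b j)` involving only
variables with `j ∉ S` (where `b` is nondecreasing), and for each `r` there are scalars
`v r j h` with `∑_{j,h} v r j h · p j h = ∑_{(S_1,…,S_d)} ∏_i X (i, r, S_i)` (sum over all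
`d`-tuples of `t`-subsets).  Then `dt < k` and `ℓ ≤ b_1 + ⋯ + b_{k−dt}` (the sum of the
`k − dt` smallest output sizes). -/
theorem linear_hss_lower_bound_algebraic (F : Type) [Field F]
    (d t k ℓ : ℕ) (hd : 0 < d) (ht : 0 < t) (hk : 0 < k) (hℓ : 0 < ℓ) (htk : t ≤ k)
    (b : Fin k → ℕ) (hmono : ∀ j j' : Fin k, j ≤ j' → b j ≤ b j')
    (p : ∀ j : Fin k, Fin (b j) →
      MvPolynomial (Fin d × Fin ℓ × {S : Finset (Fin k) // S.card = t}) F)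
    (hsupp : ∀ (j : Fin k) (h : Fin (b j)), p j h ∈ MvPolynomial.supported F
      {q : Fin d × Fin ℓ × {S : Finset (Fin k) // S.card = t} | j ∉ q.2.2.1})
    (v : Fin ℓ → ∀ j : Fin k, Fin (b j) → F)
    (hrec : ∀ r : Fin ℓ,
      (∑ j : Fin k, ∑ h : Fin (b j), MvPolynomial.C (v r j h) * p j h) =
        ∑ S : Fin d → {S : Finset (Fin k) // S.card = t},
          ∏ i : Fin d, MvPolynomial.X (i, r, S i)) :
    d * t < k ∧
      ℓ ≤ ∑ j ∈ Finset.univ.filter (fun j : Fin k => (j : ℕ) < k - d * t), b j := by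
  classical
  suffices hmain :
      ℓ ≤ ∑ j ∈ Finset.univ.filter (fun j : Fin k => (j : ℕ) < k - d * t), b j by
    refine ⟨?_, hmain⟩
    by_contra hcon
    have h0 : k - d * t = 0 := by omega
    simp [h0] at hmain
    omega
  obtain ⟨S₀, hS₀⟩ := exists_cover d t k ht htk
  have hvanish : ∀ (j : Fin k) (h : Fin (b j)) (r : Fin ℓ), ¬ (j : ℕ) < k - d * t →
      MvPolynomial.coeff (blockMonomial r S₀) (p j h) = 0 := by
    intro j h r hj
    obtain ⟨i, hi⟩ := hS₀ j (not_lt.mp hj)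
    by_contra hne
    have hvar : (i, r, S₀ i) ∈ (p j h).vars :=
      MvPolynomial.mem_vars_iff_mem_support _ |>.mpr ⟨blockMonomial r S₀, MvPolynomial.mem_support_iff.mpr hne,
        Finsupp.mem_support_iff.mpr (blockMonomial_apply_self r S₀ i)⟩
    exact (MvPolynomial.mem_supported.mp (hsupp j h) hvar) hi
  let V : Matrix (Fin ℓ) (Σ j : {j : Fin k // (j : ℕ) < k - d * t}, Fin (b j.1)) F :=
    fun r q => v r q.1.1 q.2
  let P : Matrix (Σ j : {j : Fin k // (j : ℕ) < k - d * t}, Fin (b j.1)) (Fin ℓ) F :=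
    fun q r => MvPolynomial.coeff (blockMonomial r S₀) (p q.1.1 q.2)
  have hVP : V * P = 1 := by
    ext r r'
    have h := congrArg (MvPolynomial.coeff (blockMonomial r' S₀)) (hrec r)
    rw [coeff_blockMonomial_sum F hd] at h
    simp only [MvPolynomial.coeff_sum, MvPolynomial.coeff_C_mul] at h
    rw [Matrix.one_apply, ← h, Matrix.mul_apply, Fintype.sum_sigma,
      ← Finset.sum_filter_add_sum_filter_not Finset.univ (fun j : Fin k => (j : ℕ) < k - d * t)
        (fun j => ∑ h : Fin (b j), v r j h * MvPolynomial.coeff (blockMonomial r' S₀) (p j h)),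
      Finset.sum_eq_zero (s := Finset.univ.filter (fun j : Fin k => ¬ (j : ℕ) < k - d * t)),
      add_zero]
    · exact (Finset.sum_subtype _ (by simp)
        (fun j => ∑ h : Fin (b j), v r j h *
          MvPolynomial.coeff (blockMonomial r' S₀) (p j h))).symm
    · intro j hj
      exact Finset.sum_eq_zero fun h _ => by
        rw [hvanish j h r' (Finset.mem_filter.mp hj).2, mul_zero]
  have hrank : ℓ ≤ V.rank := by
    have h := Matrix.rank_mul_le_left V P
    rwa [hVP, Matrix.rank_one, Fintype.card_fin] at h
  refine hrank.trans (V.rank_le_card_width.trans (le_of_eq ?_))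
  rw [Fintype.card_sigma]
  simp only [Fintype.card_fin]
  exact (Finset.sum_subtype _ (by simp) b).symm
end

section
/- Let k and t be integers with 0 ≤ t < k, and let b_1, …, b_k be non-negative integers. Let X, Y_1, …, Y_k be random variables on a common finite probability space such that Y_j takes values in {0,1}^{b_j} for each j ∈ [k]. Suppose: (i) for every T ⊆ [k] with |T| ≤ t, the tuple (Y_j)_{j∈T} is independent of X; (ii) there are functions f and g such that the random variable V = f(X) is uniformly distributed on a finite set 𝒴 and g(Y_1,…,Y_k) = V with probability 1. Then b_1 + ⋯ + b_k ≥ k·log₂|𝒴|/(k − t). -/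
/-!
The argument is combinatorial and needs no entropy. Fix a set `S` of `k - t` servers and any value
`y₀` that the outputs of the `t` servers outside `S` take with positive probability. By privacy,
conditioning on `y₀` does not change the support of `X`, so every `y ∈ 𝒴` is still decoded from
some completion of `y₀` by outputs of the servers in `S`. There are `2 ^ ∑ j ∈ S, b j` such
completions, hence `log₂ |𝒴| ≤ ∑ j ∈ S, b j` (`logb_card_le_sum_of_surjective`). Averaging this
bound over the `k` cyclic shifts of a single `(k - t)`-subset of `[k]`, which cover each
server exactly `k - t` times (`mul_le_sum_of_forall_card`), gives the theorem.
-/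

open scoped BigOperators Classical

/-- If every value of `g` can be reached by changing only the coordinates in `S` of a fixed tuple
`y₀`, then `𝒴` has at most `2 ^ ∑ j ∈ S, b j` elements. -/
lemma logb_card_le_sum_of_surjective {k : ℕ} {b : Fin k → ℕ} {𝒴 : Type} [Fintype 𝒴] [Nonempty 𝒴]
    (g : (∀ j : Fin k, Fin (b j) → Bool) → 𝒴) (S : Finset (Fin k))
    (y₀ : ∀ j : Fin k, Fin (b j) → Bool)
    (h : ∀ y : 𝒴, ∃ z : ∀ j : Fin k, Fin (b j) → Bool, (∀ j ∉ S, z j = y₀ j) ∧ g z = y) :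
    Real.logb 2 (Fintype.card 𝒴) ≤ ∑ j ∈ S, (b j : ℝ) := by
  have hsurj : Function.Surjective
      (fun z : (∀ j : ↥S, Fin (b j.1) → Bool) =>
        g (fun j => if hj : j ∈ S then z ⟨j, hj⟩ else y₀ j)) := by
    intro y
    obtain ⟨z, hz, rfl⟩ := h y
    refine ⟨fun j => z j.1, ?_⟩
    refine congrArg g (funext fun j => ?_)
    by_cases hj : j ∈ S
    · simp [hj]
    · simp [hj, hz j hj]
  have hcard : Fintype.card 𝒴 ≤ 2 ^ ∑ j ∈ S, b j := by
    refine (Fintype.card_le_of_surjective _ hsurj).trans_eq ?_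
    simp only [Fintype.card_pi, Fintype.card_bool, Finset.prod_const, Finset.card_univ,
      Fintype.card_fin]
    rw [Finset.prod_pow_eq_pow_sum, ← Finset.sum_coe_sort S b]
  have hpos : (0 : ℝ) < Fintype.card 𝒴 := by exact_mod_cast Fintype.card_pos
  rw [Real.logb_le_iff_le_rpow one_lt_two hpos, ← Nat.cast_sum, Real.rpow_natCast]
  exact_mod_cast hcard

/-- Averaging over cyclic shifts: a lower bound `c` for the sum of `b` over every `m`-subset of
`Fin k` gives the lower bound `k * c / m` for the total sum. -/
lemma mul_le_sum_of_forall_card {k m : ℕ} (hk : 0 < k) (hm : m ≤ k) (b : Fin k → ℝ) (c : ℝ)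
    (h : ∀ S : Finset (Fin k), S.card = m → c ≤ ∑ j ∈ S, b j) :
    (k : ℝ) * c ≤ m * ∑ j, b j := by
  have : NeZero k := ⟨hk.ne'⟩
  obtain ⟨I, -, hI⟩ := Finset.exists_subset_card_eq (s := (Finset.univ : Finset (Fin k)))
    (n := m) (by simpa using hm)
  have hshift : ∀ s : Fin k, c ≤ ∑ i ∈ I, b (i + s) := fun s => by
    have := h (I.map (Equiv.addRight s).toEmbedding) (by simpa using hI)
    simpa [Finset.sum_map] using this
  calc (k : ℝ) * c = ∑ _s : Fin k, c := by simp
    _ ≤ ∑ s : Fin k, ∑ i ∈ I, b (i + s) := Finset.sum_le_sum fun s _ => hshift s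
    _ = ∑ i ∈ I, ∑ s : Fin k, b (i + s) := Finset.sum_comm
    _ = ∑ _i ∈ I, ∑ j, b j :=
        Finset.sum_congr rfl fun i _ => Equiv.sum_comp (Equiv.addLeft i) b
    _ = m * ∑ j, b j := by simp [hI]

/-- **Information-theoretic download lower bound for general HSS.**
Let `0 ≤ t < k` and let `X, Y_1, …, Y_k` be random variables on a common finite probability
space `(Ω, p)`, with `Y_j` taking values in `{0,1}^{b_j}`.  Suppose (i) for every `T ⊆ [k]`
with `|T| ≤ t` the tuple `(Y_j)_{j∈T}` is independent of `X`, and (ii) there are functions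
`f, g` with `V = f(X)` uniform on a finite set `𝒴` and `g(Y_1,…,Y_k) = V` with probability
one.  Then `b_1 + ⋯ + b_k ≥ k·log₂|𝒴| / (k − t)`. -/
theorem hss_download_lower_bound_nonlinear (k t : ℕ) (ht : t < k) (b : Fin k → ℕ)
    (Ω 𝒳 𝒴 : Type) [Fintype Ω] [Fintype 𝒴] [Nonempty 𝒴]
    (p : Ω → ℝ) (hp0 : ∀ ω, 0 ≤ p ω) (hp1 : ∑ ω, p ω = 1)
    (X : Ω → 𝒳) (Y : ∀ j : Fin k, Ω → (Fin (b j) → Bool))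
    (f : 𝒳 → 𝒴) (g : (∀ j : Fin k, Fin (b j) → Bool) → 𝒴)
    (hindep : ∀ T : Finset (Fin k), T.card ≤ t →
      ∀ (a : 𝒳) (yv : ∀ j : ↥T, Fin (b j.1) → Bool),
        (∑ ω ∈ Finset.univ.filter
            (fun ω => X ω = a ∧ ∀ j : ↥T, Y j.1 ω = yv j), p ω) =
          (∑ ω ∈ Finset.univ.filter (fun ω => X ω = a), p ω) *
            (∑ ω ∈ Finset.univ.filter (fun ω => ∀ j : ↥T, Y j.1 ω = yv j), p ω))
    (huniform : ∀ y : 𝒴,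
      (∑ ω ∈ Finset.univ.filter (fun ω => f (X ω) = y), p ω) = 1 / (Fintype.card 𝒴 : ℝ))
    (hg : ∀ ω : Ω, p ω ≠ 0 → g (fun j => Y j ω) = f (X ω)) :
    (k : ℝ) * Real.logb 2 (Fintype.card 𝒴) / ((k : ℝ) - (t : ℝ)) ≤ ∑ j, (b j : ℝ) := by
  have hsupp : ∀ (q : Ω → Prop) [DecidablePred q],
      (∑ ω ∈ Finset.univ.filter q, p ω) ≠ 0 → ∃ ω, q ω ∧ p ω ≠ 0 := by
    intro q _ hq
    obtain ⟨ω, hω, hne⟩ := Finset.exists_ne_zero_of_sum_ne_zero hq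
    exact ⟨ω, (Finset.mem_filter.mp hω).2, hne⟩
  have hpos : ∀ (q : Ω → Prop) [DecidablePred q] (ω : Ω), q ω → p ω ≠ 0 →
      (∑ ω ∈ Finset.univ.filter q, p ω) ≠ 0 := by
    intro q _ ω hq hne h0
    rw [Finset.sum_eq_zero_iff_of_nonneg fun ω _ => hp0 ω] at h0
    exact hne (h0 ω (by simpa using hq))
  obtain ⟨ω₀, -, hω₀⟩ := Finset.exists_ne_zero_of_sum_ne_zero (hp1.trans_ne one_ne_zero)
  have key : ∀ S : Finset (Fin k), S.card = k - t →
      Real.logb 2 (Fintype.card 𝒴) ≤ ∑ j ∈ S, (b j : ℝ) := by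
    intro S hS
    refine logb_card_le_sum_of_surjective g S (fun j => Y j ω₀) fun y => ?_
    have hT : Sᶜ.card ≤ t := by
      rw [Finset.card_compl, Fintype.card_fin]
      omega
    obtain ⟨ω₁, rfl, hω₁⟩ := hsupp (fun ω => f (X ω) = y) (by
      rw [huniform y]
      exact one_div_ne_zero (by exact_mod_cast Fintype.card_ne_zero))
    -- By independence, the events `X = X ω₁` and `Y_T = Y_T ω₀` (`T = Sᶜ`) occur jointly.
    obtain ⟨ω, ⟨hX, hY⟩, hω⟩ := hsupp
        (fun ω => X ω = X ω₁ ∧ ∀ j : ↥Sᶜ, Y j.1 ω = Y j.1 ω₀) (by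
      refine ne_of_eq_of_ne (hindep Sᶜ hT (X ω₁) fun j => Y j.1 ω₀) ?_
      exact mul_ne_zero (hpos (fun ω => X ω = X ω₁) ω₁ rfl hω₁)
        (hpos (fun ω => ∀ j : ↥Sᶜ, Y j.1 ω = Y j.1 ω₀) ω₀ (fun _ => rfl) hω₀))
    exact ⟨fun j => Y j ω, fun j hj => hY ⟨j, Finset.mem_compl.mpr hj⟩, by rw [hg ω hω, hX]⟩
  have hkt : (0 : ℝ) < (k : ℝ) - t := sub_pos.mpr (by exact_mod_cast ht)
  have hsum := mul_le_sum_of_forall_card (by omega) (Nat.sub_le k t) (fun j => (b j : ℝ)) _ key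
  rw [Nat.cast_sub ht.le] at hsum
  rw [div_le_iff₀ hkt]
  linarith
end

section
/- Let F be a finite field and let k, t, ℓ be positive integers with t < k. Let L be the k-party ℓ-LMSSS over F given by ℓ independent instances of t-private k-party CNF sharing, and let L' = (Share', Rec') be any t-private k-party ℓ-LMSSS over F with parameters (e', b'_1, …, b'_k). Then L is locally convertible to L': there exist functions φ_j (for j ∈ [k]) from party j's CNF shares to F^{b'_j} such that for every secret x = (x_1,…,x_ℓ) ∈ F^ℓ and every choice of CNF additive shares (x_{i,S})_{i∈[ℓ], S∈binom([k],t)} with Σ_S x_{i,S} = x_i for all i, there exists r' ∈ F^{e'} with (φ_1(view_1), …, φ_k(view_k)) = Share'(x, r'), where view_j = (x_{i,S})_{i∈[ℓ], S : j∉S} is party j's CNF share vector. -/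
/-!
Fix a `t`-subset `S` and a vector `y ∈ F^ℓ`. The zero secret with zero randomness has all shares
zero, so by `t`-privacy `y` too has a sharing `Share' (y, ρ S y)` whose shares vanish on `S`
(`exists_share_vanishing`). Given CNF shares with `x = ∑_S x_S`, linearity shows that
`∑_S Share' (x_S, ρ S x_S)` equals `Share' (x, ∑_S ρ S x_S)`, a valid sharing of `x`. Its `j`-th
component only involves the `S` with `j ∉ S`, as the others contribute zero there, so party `j` can
compute it from its view.
-/

open scoped BigOperators

/-- Privacy against `T` yields, for every secret, a sharing in which the parties of `T` all receive
zero: the zero secret admits one, and the view of `T` has the same distribution for all secrets. -/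
lemma exists_share_vanishing {F : Type} [Field F] [Fintype F] {k ℓ e' : ℕ} {b' : Fin k → ℕ}
    (Share' : ((Fin ℓ → F) × (Fin e' → F)) →ₗ[F] (∀ j : Fin k, Fin (b' j) → F))
    (T : Finset (Fin k))
    (hpriv : ∀ x x' : Fin ℓ → F, ∀ v : ∀ j : ↥T, Fin (b' j.1) → F,
        Nat.card {r : Fin e' → F // (fun j : ↥T => Share' (x, r) j.1) = v} =
          Nat.card {r : Fin e' → F // (fun j : ↥T => Share' (x', r) j.1) = v})
    (y : Fin ℓ → F) :
    ∃ r : Fin e' → F, ∀ j ∈ T, Share' (y, r) j = 0 := by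
  have hzero : Nonempty {r : Fin e' → F // (fun j : ↥T => Share' (0, r) j.1) = 0} := by
    refine ⟨0, ?_⟩
    funext j
    rw [show ((0 : Fin ℓ → F), (0 : Fin e' → F)) = 0 from rfl, map_zero]
    rfl
  have hpos : 0 < Nat.card {r : Fin e' → F // (fun j : ↥T => Share' (y, r) j.1) = 0} := by
    rw [hpriv y 0 0]
    exact Nat.card_pos
  obtain ⟨r, hr⟩ := (Nat.card_pos_iff.mp hpos).1
  exact ⟨r, fun j hj => congrFun hr ⟨j, hj⟩⟩

/-- **Local share conversion from CNF to any `t`-private LMSSS (Corollary: cdiplusplus).**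
Let `L'` = `(Share', Rec')` be any `t`-private `k`-party `ℓ`-LMSSS over a finite field `F`
(with the full party set qualified).  Then `ℓ` independent instances of `t`-private
`k`-party CNF sharing can be locally converted to `L'`: there are functions `φ_j` from party
`j`'s CNF shares to `F^{b'_j}` such that for every secret `x ∈ F^ℓ` and every valid CNF
additive sharing `(x_{i,S})` of it (`∑_S x_{i,S} = x_i`), there is randomness `r'` with
`(φ_1(view_1), …, φ_k(view_k)) = Share'(x, r')`, where `view_j` consists of the shares
`x_{i,S}` with `j ∉ S`. -/
theorem cnf_locally_convertible_to_lmsss (F : Type) [Field F] [Fintype F]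
    (k t ℓ : ℕ) (hk : 0 < k) (ht : 0 < t) (hℓ : 0 < ℓ) (htk : t < k)
    (e' : ℕ) (b' : Fin k → ℕ)
    (Share' : ((Fin ℓ → F) × (Fin e' → F)) →ₗ[F] (∀ j : Fin k, Fin (b' j) → F))
    (Rec' : (∀ j : Fin k, Fin (b' j) → F) →ₗ[F] (Fin ℓ → F))
    (hcorrect : ∀ (x : Fin ℓ → F) (r : Fin e' → F), Rec' (Share' (x, r)) = x)
    (hpriv : ∀ T : Finset (Fin k), T.card ≤ t → ∀ x x' : Fin ℓ → F,
      ∀ v : ∀ j : ↥T, Fin (b' j.1) → F,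
        Nat.card {r : Fin e' → F // (fun j : ↥T => Share' (x, r) j.1) = v} =
          Nat.card {r : Fin e' → F // (fun j : ↥T => Share' (x', r) j.1) = v}) :
    ∃ φ : ∀ j : Fin k,
        (Fin ℓ → ({S : TSubset k t // j ∉ S.1} → F)) → (Fin (b' j) → F),
      ∀ (x : Fin ℓ → F) (xs : Fin ℓ → TSubset k t → F),
        (∀ i, ∑ S, xs i S = x i) →
        ∃ r' : Fin e' → F,
          (fun j => φ j (fun i S => xs i S.1)) = Share' (x, r') := by
  classical
  have hvanish : ∀ (S : TSubset k t) (y : Fin ℓ → F),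
      ∃ r : Fin e' → F, ∀ j ∈ S.1, Share' (y, r) j = 0 := fun S y =>
    exists_share_vanishing Share' S.1 (hpriv S.1 S.2.le) y
  choose ρ hρ using hvanish
  refine ⟨fun j view => ∑ S : {S : TSubset k t // j ∉ S.1},
    Share' (fun i => view i S, ρ S.1 (fun i => view i S)) j, fun x xs hxs => ?_⟩
  refine ⟨∑ S, ρ S (fun i => xs i S), ?_⟩
  have hsum : (x, ∑ S, ρ S (fun i => xs i S)) =
      ∑ S : TSubset k t, ((fun i => xs i S), ρ S (fun i => xs i S)) := by
    refine Prod.ext ?_ ?_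
    · funext i
      simp [Prod.fst_sum, hxs]
    · simp [Prod.snd_sum]
  rw [hsum, map_sum]
  funext j
  rw [Finset.sum_apply]
  -- The terms with `j ∈ S` vanish by the choice of `ρ`.
  rw [← Fintype.sum_subtype_add_sum_subtype (fun S : TSubset k t => j ∉ S.1)
    (fun S => Share' ((fun i => xs i S), ρ S (fun i => xs i S)) j)]
  have hin : ∑ S : {S : TSubset k t // ¬ j ∉ S.1},
      Share' ((fun i => xs i S.1), ρ S.1 (fun i => xs i S.1)) j = 0 :=
    Finset.sum_eq_zero fun S _ => hρ S.1 _ j (not_not.mp S.2)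
  rw [hin, add_zero]
end

section
/- Let k ≥ 2 be an integer and F a finite field. There is a black-box transformation with parameters (t = 1, k, k₀ = 2, ℓ = k−1, F) and rate 1 − 1/k. Furthermore, the transformation can be chosen so that for every j ∈ [k], c_j = k−1, where c_j = Σ_{i=1}^ℓ |{v ∈ [k₀] : j ∈ ψ_i(v)}|. -/
/-!
Write `k = n + 1`, let the parties be `0, 1, …, n`, and attach party `i + 1` to the `i`-th secret.
The share `y_i^{(0)}` goes to party `i + 1` alone and `y_i^{(1)}` goes to all other parties, so each
party holds exactly one of the two additive shares of each secret.  Party `0` outputs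
`S = ∑ m, y_m^{(1)}`, and party `i + 1` outputs `y_i^{(0)} - ∑ m ≠ i, y_m^{(1)}`, which equals
`(y_i^{(0)} + y_i^{(1)}) - S`.  The outputs are therefore the sharing `(r, x_0 - r, …, x_{n-1} - r)`
of the sums `x_i` with randomness `r = S`: one field element per party, reconstructed by adding the
share of party `0` to that of party `i + 1`.
-/

open scoped BigOperators

/-- A black-box transformation for `(t, k, k₀, ℓ, F)` with a given replication function `ψ`
and given LMSSS share sizes `bs`: there is a `k`-party `ℓ`-LMSSS `L = (Share_L, Rec_L)`
over `F` (linear sharing and reconstruction with `Rec_L (Share_L x r) = x`) and conversion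
functions `φ_j` (from party `j`'s view `(y_i^{(v)})_{i, v : j ∈ ψ i v}` to `F^{bs j}`) such
that (correctness) for every matrix `(y_i^{(v)})` the converted shares form a valid
`L`-sharing of the sums `(∑_v y_i^{(v)})_i`, and (security) for every coalition
`T ⊆ [k]` with `|T| ≤ t` and every `i`, `|⋃_{j∈T} {v : j ∈ ψ i v}| ≤ k₀ − 1`. -/
def IsBBTWith (F : Type) [Field F] [Fintype F] (t k k₀ ℓ : ℕ) (bs : Fin k → ℕ)
    (ψ : Fin ℓ → Fin k₀ → Finset (Fin k)) : Prop :=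
  ∃ (e : ℕ)
    (ShareL : ((Fin ℓ → F) × (Fin e → F)) →ₗ[F] (∀ j : Fin k, Fin (bs j) → F))
    (RecL : (∀ j : Fin k, Fin (bs j) → F) →ₗ[F] (Fin ℓ → F))
    (φ : ∀ j : Fin k,
      ((i : Fin ℓ) → ({v : Fin k₀ // j ∈ ψ i v} → F)) → (Fin (bs j) → F)),
    (∀ (x : Fin ℓ → F) (r : Fin e → F), RecL (ShareL (x, r)) = x) ∧
    (∀ y : Fin ℓ → Fin k₀ → F, ∃ r : Fin e → F,
      (fun j => φ j (fun i v => y i v.1)) = ShareL ((fun i => ∑ v, y i v), r)) ∧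
    (∀ T : Finset (Fin k), T.card ≤ t → ∀ i : Fin ℓ,
      (Finset.univ.filter (fun v : Fin k₀ => ∃ j ∈ T, j ∈ ψ i v)).card ≤ k₀ - 1)

/-- The replication function: share `0` of secret `i` goes to party `i + 1` only, share `1` to
everybody else. -/
def starPsi (n : ℕ) (i : Fin n) (v : Fin 2) : Finset (Fin (n + 1)) :=
  if v = 0 then {i.succ} else {i.succ}ᶜ

lemma mem_starPsi_zero {n : ℕ} {i : Fin n} {j : Fin (n + 1)} :
    j ∈ starPsi n i 0 ↔ j = i.succ := by
  simp [starPsi]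

lemma mem_starPsi_one {n : ℕ} {i : Fin n} {j : Fin (n + 1)} :
    j ∈ starPsi n i 1 ↔ j ≠ i.succ := by
  simp [starPsi]

/-- Each party holds exactly one of the two shares of each secret. -/
lemma card_filter_mem_starPsi {n : ℕ} (i : Fin n) (j : Fin (n + 1)) :
    (Finset.univ.filter (fun v : Fin 2 => j ∈ starPsi n i v)).card = 1 := by
  rw [Finset.card_filter, Fin.sum_univ_two]
  by_cases h : j = i.succ <;> simp [mem_starPsi_zero, mem_starPsi_one, h]

/-- The sharing map `(x, r) ↦ (r, x_0 - r, …, x_{n-1} - r)`. -/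
def starShare (F : Type) [Field F] (n : ℕ) :
    ((Fin n → F) × (Fin 1 → F)) →ₗ[F] (Fin (n + 1) → Fin 1 → F) where
  toFun p := Fin.cons p.2 (fun i _ => p.1 i - p.2 0)
  map_add' p q := by
    ext j a
    refine Fin.cases ?_ (fun i => ?_) j
    · simp
    · simp; ring
  map_smul' c p := by
    ext j a
    refine Fin.cases ?_ (fun i => ?_) j
    · simp
    · simp; ring

/-- Reconstruction: `z ↦ (z_{i+1} + z_0)_i`. -/
def starRec (F : Type) [Field F] (n : ℕ) : (Fin (n + 1) → Fin 1 → F) →ₗ[F] (Fin n → F) where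
  toFun z i := z i.succ 0 + z 0 0
  map_add' z w := by ext i; simp; ring
  map_smul' c z := by ext i; simp; ring

/-- The local conversion of party `j`: its view of the shares `1` is summed with sign `+` for party
`0` and `-` for the others, and party `i + 1` adds `y_i^{(0)}`. -/
def starPhi (F : Type) [Field F] (n : ℕ) (j : Fin (n + 1))
    (w : (i : Fin n) → ({v : Fin 2 // j ∈ starPsi n i v} → F)) : Fin 1 → F :=
  fun _ => ∑ i : Fin n,
    if h : j = i.succ then w i ⟨0, mem_starPsi_zero.2 h⟩
    else (if j = 0 then 1 else -1) * w i ⟨1, mem_starPsi_one.2 h⟩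

lemma starPhi_zero (F : Type) [Field F] (n : ℕ) (y : Fin n → Fin 2 → F) (a : Fin 1) :
    starPhi F n 0 (fun i v => y i v.1) a = ∑ m, y m 1 := by
  simp [starPhi, (Fin.succ_ne_zero _).symm]

lemma starPhi_succ (F : Type) [Field F] (n : ℕ) (y : Fin n → Fin 2 → F) (i : Fin n) (a : Fin 1) :
    starPhi F n i.succ (fun i v => y i v.1) a = y i 0 + y i 1 - ∑ m, y m 1 := by
  have h : ∀ m : Fin n, (if i = m then y m 0 else -y m 1)
      = (if i = m then y m 0 + y m 1 else 0) - y m 1 := by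
    intro m
    split_ifs <;> ring
  simp [starPhi, h]

lemma isBBTWith_star (F : Type) [Field F] [Fintype F] (n : ℕ) :
    IsBBTWith F 1 (n + 1) 2 n (fun _ => 1) (starPsi n) := by
  refine ⟨1, starShare F n, starRec F n, starPhi F n, ?_, ?_, ?_⟩
  · intro x r
    ext i
    simp [starRec, starShare]
  · intro y
    refine ⟨fun _ => ∑ m, y m 1, ?_⟩
    ext j a
    refine Fin.cases ?_ (fun i => ?_) j
    · simp [starPhi_zero, starShare]
    · simp [starPhi_succ, starShare]
  · intro T hT i
    rcases Finset.card_le_one_iff_subset_singleton.1 hT with ⟨j, hj⟩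
    refine le_trans (Finset.card_le_card ?_) (card_filter_mem_starPsi i j).le
    intro v hv
    obtain ⟨j', hj', hv'⟩ := (Finset.mem_filter.1 hv).2
    obtain rfl := Finset.mem_singleton.1 (hj hj')
    exact Finset.mem_filter.2 ⟨Finset.mem_univ v, hv'⟩

/-- **Optimal black-box transformations with `k₀ = 2`.**
For every integer `k ≥ 2` and finite field `F`, there is a black-box transformation with
parameters `(t = 1, k, k₀ = 2, ℓ = k − 1, F)` and rate `1 − 1/k`; moreover, it can be
chosen so that `c_j = k − 1` for every `j ∈ [k]`. -/
theorem blackbox_k0_two (F : Type) [Field F] [Fintype F] (k : ℕ) (hk : 2 ≤ k) :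
    ∃ (bs : Fin k → ℕ) (ψ : Fin (k - 1) → Fin 2 → Finset (Fin k)),
      IsBBTWith F 1 k 2 (k - 1) bs ψ ∧
      ((k - 1 : ℕ) : ℚ) / (∑ j, (bs j : ℚ)) = 1 - 1 / (k : ℚ) ∧
      ∀ j : Fin k,
        (∑ i : Fin (k - 1),
          (Finset.univ.filter (fun v : Fin 2 => j ∈ ψ i v)).card) = k - 1 := by
  obtain ⟨n, rfl⟩ : ∃ n, k = n + 1 := ⟨k - 1, by omega⟩
  refine ⟨fun _ => 1, starPsi n, isBBTWith_star F n, ?_, fun j => ?_⟩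
  · have h : ((n : ℚ) + 1) ≠ 0 := by positivity
    simp
    field_simp
    ring
  · calc ∑ i : Fin n, (Finset.univ.filter (fun v : Fin 2 => j ∈ starPsi n i v)).card
        = ∑ _i : Fin n, 1 := Finset.sum_congr rfl fun i _ => card_filter_mem_starPsi i j
      _ = n := by simp
end

section
/- Let k₀ < q be positive integers and F a finite field. Suppose 𝒮 is a family of (k₀−1)-element subsets of [q] such that any two distinct sets S₁, S₂ ∈ 𝒮 satisfy |S₁ ∩ S₂| ≤ 1. Then there is a black-box transformation with parameters (t = k₀−1, k = q + |𝒮|, k₀, ℓ = |𝒮|, F) and rate 1 − q/(q + |𝒮|). Furthermore, the transformation can be chosen so that for every j ∈ [q + |𝒮|], c_j ≤ |𝒮|, where c_j = Σ_{i=1}^ℓ |{v ∈ [k₀] : j ∈ ψ_i(v)}|. -/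
/-!
The idea. Enumerate the blocks of the family as `S i`. There is one party `p` for each point of
`[q]` and one party `m` for each block. The scheme `L` uses one random field element `r p` per point:
point party `p` receives `r p`, and block party `m` receives `x m - ∑ p ∈ S m, r p`. Every share is a
single field element, hence the rate `ℓ / (q + ℓ)`.

Since `|S i| + 1 = k₀`, the `k₀` additive shares of the `i`-th secret can be labelled injectively by
the points of `S i` and one extra label `none`; write `τ i v` for the label of `v`. Point party `p`
gets all `y i v` with label `p`, and uses their sum as its share `r p`. The share of block party `m`
is then forced to be `(y m v with label none) - ∑ i ≠ m, (y i v with label in S m)`, so it is given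
exactly these values (`Holds`). As `|S i ∩ S m| ≤ 1` for `i ≠ m`, every party sees at most one
additive share of each secret (`holds_unique`), which yields both security and `c_j ≤ ℓ`.
`block_share` is the computation behind correctness.
-/

open scoped BigOperators

/-- Whether a party (a point `p` on the left, a block `m` on the right) is given the `v`-th additive
share of the `i`-th secret. The label `τ i v` is a point of `S i`, or `none` for the additive share
reserved to the block party `i`. -/
def Holds {q l k₀ : ℕ} (S : Fin l → Finset (Fin q)) (τ : Fin l → Fin k₀ → Option (Fin q)) :
    Fin q ⊕ Fin l → Fin l → Fin k₀ → Prop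
  | .inl p, i, v => τ i v = some p
  | .inr m, i, v => (i = m ∧ τ i v = none) ∨ (i ≠ m ∧ ∃ p ∈ S m, τ i v = some p)

lemma holds_unique {q l k₀ : ℕ} {S : Fin l → Finset (Fin q)}
    {τ : Fin l → Fin k₀ → Option (Fin q)}
    (hS : ∀ i m, i ≠ m → (S i ∩ S m).card ≤ 1)
    (hinj : ∀ i, Function.Injective (τ i)) (hmem : ∀ i v p, τ i v = some p → p ∈ S i)
    (j : Fin q ⊕ Fin l) (i : Fin l) (v w : Fin k₀)
    (hv : Holds S τ j i v) (hw : Holds S τ j i w) : v = w := by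
  apply hinj i
  rcases j with p | m
  · simp only [Holds] at hv hw
    rw [hv, hw]
  · rcases hv with ⟨h1, h2⟩ | ⟨h1, a, ha, h2⟩ <;> rcases hw with ⟨h3, h4⟩ | ⟨h3, b, hb, h4⟩
    · rw [h2, h4]
    · exact absurd h1 h3
    · exact absurd h3 h1
    · have hab : a = b := Finset.card_le_one.mp (hS i m h1) a
        (Finset.mem_inter.mpr ⟨hmem i v a h2, ha⟩) b (Finset.mem_inter.mpr ⟨hmem i w b h4, hb⟩)
      rw [h2, h4, hab]

open Classical in
/-- The signed sum of everything block party `m` holds is its share of `∑ v, y m v` in the scheme `L`,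
when the randomness at each point `p` is the sum of what point party `p` holds. -/
lemma block_share {F : Type} [Field F] {q l k₀ : ℕ} {S : Fin l → Finset (Fin q)}
    {τ : Fin l → Fin k₀ → Option (Fin q)} (hmem : ∀ i v p, τ i v = some p → p ∈ S i)
    (y : Fin l → Fin k₀ → F) (m : Fin l) :
    ∑ i, (if i = m then 1 else -1) * ∑ v, (if Holds S τ (.inr m) i v then y i v else 0)
      = ∑ v, y m v - ∑ p ∈ S m, ∑ i, ∑ v, (if Holds S τ (.inl p) i v then y i v else 0) := by
  have h1 : ∑ v, y m v = ∑ i, ∑ v, (if i = m then y i v else 0) := by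
    rw [Finset.sum_eq_single m] <;> simp +contextual
  rw [h1, Finset.sum_comm (s := S m), ← Finset.sum_sub_distrib]
  refine Finset.sum_congr rfl fun i _ => ?_
  rw [Finset.sum_comm (s := S m), ← Finset.sum_sub_distrib, Finset.mul_sum]
  refine Finset.sum_congr rfl fun v _ => ?_
  rcases h : τ i v with _ | p
  · by_cases him : i = m
    · subst him
      simp [Holds, h]
    · simp [Holds, h, him]
  · by_cases him : i = m
    · have := hmem i v p h
      subst him
      simp [Holds, h, this]
    · by_cases hp : p ∈ S m <;> simp [Holds, h, him, hp]

/-- Labels of the additive shares: `k₀` of them fit into the points of `T` together with `none`. -/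
lemma exists_labels {q k₀ : ℕ} (hk₀ : 0 < k₀) (T : Finset (Fin q)) (hT : T.card = k₀ - 1) :
    ∃ τ : Fin k₀ → Option (Fin q), Function.Injective τ ∧ ∀ v p, τ v = some p → p ∈ T := by
  have hc : Fintype.card (Fin k₀) = Fintype.card (Option {p // p ∈ T}) := by
    simp [hT]; omega
  let σ := Fintype.equivOfCardEq hc
  refine ⟨fun v => (σ v).map Subtype.val, ?_, ?_⟩
  · exact (Option.map_injective Subtype.val_injective).comp σ.injective
  · intro v p h
    obtain ⟨a, -, rfl⟩ := Option.map_eq_some_iff.mp h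
    exact a.2

/-- **Black-box transformations from packing designs.**
Let `k₀ < q` be positive integers, `F` a finite field, and `𝒮` a family of
`(k₀−1)`-element subsets of `[q]` any two distinct members of which meet in at most one
element.  Then there is a black-box transformation with parameters
`(t = k₀−1, k = q + |𝒮|, k₀, ℓ = |𝒮|, F)` and rate `1 − q/(q + |𝒮|)`; moreover, it can
be chosen so that `c_j ≤ |𝒮|` for every `j`. -/
theorem blackbox_from_packing (F : Type) [Field F] [Fintype F] (k₀ q : ℕ)
    (hk₀ : 0 < k₀) (hq : k₀ < q)
    (𝒮 : Finset (Finset (Fin q)))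
    (hcard : ∀ S ∈ 𝒮, S.card = k₀ - 1)
    (hmeet : ∀ S₁ ∈ 𝒮, ∀ S₂ ∈ 𝒮, S₁ ≠ S₂ → (S₁ ∩ S₂).card ≤ 1) :
    ∃ (bs : Fin (q + 𝒮.card) → ℕ)
      (ψ : Fin 𝒮.card → Fin k₀ → Finset (Fin (q + 𝒮.card))),
      IsBBTWith F (k₀ - 1) (q + 𝒮.card) k₀ 𝒮.card bs ψ ∧
      (𝒮.card : ℚ) / (∑ j, (bs j : ℚ)) = 1 - (q : ℚ) / ((q : ℚ) + (𝒮.card : ℚ)) ∧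
      ∀ j : Fin (q + 𝒮.card),
        (∑ i : Fin 𝒮.card,
          (Finset.univ.filter (fun v : Fin k₀ => j ∈ ψ i v)).card) ≤ 𝒮.card := by
  classical
  let S : Fin 𝒮.card → Finset (Fin q) := fun i => (𝒮.equivFin.symm i).1
  have hSmem : ∀ i, S i ∈ 𝒮 := fun i => (𝒮.equivFin.symm i).2
  have hS : ∀ i m, i ≠ m → (S i ∩ S m).card ≤ 1 := fun i m him =>
    hmeet _ (hSmem i) _ (hSmem m) fun h => him (𝒮.equivFin.symm.injective (Subtype.ext h))
  choose τ hinj hmem using fun i => exists_labels hk₀ (S i) (hcard _ (hSmem i))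
  let ψ : Fin 𝒮.card → Fin k₀ → Finset (Fin (q + 𝒮.card)) := fun i v =>
    Finset.univ.filter fun j => Holds S τ (finSumFinEquiv.symm j) i v
  have hψ : ∀ i v j, j ∈ ψ i v ↔ Holds S τ (finSumFinEquiv.symm j) i v := by
    intro i v j
    simp [ψ]
  have hone : ∀ j i, (Finset.univ.filter (fun v : Fin k₀ => j ∈ ψ i v)).card ≤ 1 := by
    intro j i
    refine Finset.card_le_one.mpr fun v hv w hw => ?_
    simp only [Finset.mem_filter, Finset.mem_univ, true_and, hψ] at hv hw
    exact holds_unique hS hinj hmem _ i v w hv hw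
  refine ⟨fun _ => 1, ψ, ?_, ?_, ?_⟩
  · let sgn : Fin q ⊕ Fin 𝒮.card → Fin 𝒮.card → F := fun j i =>
      Sum.elim (fun _ => 1) (fun m => if i = m then 1 else -1) j
    refine ⟨q,
      { toFun := fun xr j _ => Sum.elim (fun p => xr.2 p)
          (fun m => xr.1 m - ∑ p ∈ S m, xr.2 p) (finSumFinEquiv.symm j)
        map_add' := ?_
        map_smul' := ?_ },
      { toFun := fun s m => s (finSumFinEquiv (.inr m)) 0 +
          ∑ p ∈ S m, s (finSumFinEquiv (.inl p)) 0
        map_add' := ?_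
        map_smul' := ?_ },
      fun j z _ => ∑ i, sgn (finSumFinEquiv.symm j) i *
        ∑ v, (if h : j ∈ ψ i v then z i ⟨v, h⟩ else 0), ?_, ?_, ?_⟩
    · intro a b
      funext j _
      rcases h : finSumFinEquiv.symm j with p | m
      · simp [h]
      · simp [h, Finset.sum_add_distrib]; ring
    · intro c a
      funext j _
      rcases h : finSumFinEquiv.symm j with p | m
      · simp [h]
      · simp [h, ← Finset.mul_sum]; ring
    · intro a b
      funext m
      simp [Finset.sum_add_distrib]; ring
    · intro c a
      funext m
      simp [← Finset.mul_sum]; ring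
    · intro x r
      funext m
      simp [-finSumFinEquiv_apply_left, -finSumFinEquiv_apply_right]
    · intro y
      -- the randomness at a point is the sum of all additive shares held by its party
      refine ⟨fun p => ∑ i, ∑ v, (if Holds S τ (.inl p) i v then y i v else 0), ?_⟩
      funext j _
      rcases h : finSumFinEquiv.symm j with p | m
      · simp [h, hψ, sgn]
      · simpa [h, hψ, sgn] using block_share hmem y m
    · intro T hT i
      have hU : (Finset.univ.filter (fun v : Fin k₀ => ∃ j ∈ T, j ∈ ψ i v))
          = T.biUnion fun j => Finset.univ.filter (fun v : Fin k₀ => j ∈ ψ i v) := by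
        ext v
        simp
      rw [hU]
      refine (Finset.card_biUnion_le_card_mul _ _ 1 fun j _ => hone j i).trans ?_
      simpa using hT
  · have hq0 : (q : ℚ) + (𝒮.card : ℚ) ≠ 0 := by
      have : (0 : ℚ) < q := by exact_mod_cast hk₀.trans hq
      positivity
    simp
    field_simp
    ring
  · intro j
    refine (Finset.sum_le_sum fun i _ => hone j i).trans ?_
    simp
end

section
/- Let F be a finite field with |F| > 3 and let α_1, α_2, α_3 be distinct nonzero elements of F. For (x_1, x_2) ∈ F², let D(x_1,x_2) be the probability distribution on F³ of the triple ( (x_1 + r_1α_1)(x_2 + r_2α_1), (x_1 + r_1α_2)(x_2 + r_2α_2), (x_1 + r_1α_3)(x_2 + r_2α_3) ), where r_1 and r_2 are independent and uniformly distributed in F. Then D(0,0) ≠ D(0,1), even though 0·0 = 0·1. -/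
/-- **Shamir-based multiplicative HSS is not symmetrically private.**
Let `F` be a finite field with `|F| > 3` and `α_1, α_2, α_3` distinct nonzero elements of
`F`.  For `(x_1, x_2) ∈ F²`, the output shares of the 1-private 3-server Shamir-based HSS
for the product are `((x_1 + r_1 α_j)(x_2 + r_2 α_j))_{j ∈ [3]}` with `r_1, r_2` uniform
and independent in `F`.  The distributions of this triple for secrets `(0,0)` and `(0,1)`
differ (as witnessed by some outcome having different counts of randomness pairs), even
though `0·0 = 0·1`. -/
theorem shamir_hss_not_symmetrically_private (F : Type) [Field F] [Fintype F]
    (hF : 3 < Fintype.card F)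
    (α : Fin 3 → F) (hinj : Function.Injective α) (hne : ∀ j, α j ≠ 0) :
    ¬ ∀ y : Fin 3 → F,
        Nat.card {r : F × F //
            (fun j => ((0 : F) + r.1 * α j) * ((0 : F) + r.2 * α j)) = y} =
          Nat.card {r : F × F //
            (fun j => ((0 : F) + r.1 * α j) * ((1 : F) + r.2 * α j)) = y} := by
  intro h
  -- The outcome `α` arises from secrets `(0,1)` with `r = (1,0)`. From `(0,0)` it would force
  -- `r₁ r₂ α_j = 1` for every `j`, contradicting the distinctness of the `α_j`.
  have hα := h α
  have hempty : IsEmpty {r : F × F //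
      (fun j => ((0 : F) + r.1 * α j) * ((0 : F) + r.2 * α j)) = α} := by
    refine ⟨fun ⟨r, hr⟩ => ?_⟩
    have key : ∀ j, r.1 * r.2 * α j = 1 := fun j => by
      have hj := congrFun hr j
      apply mul_right_cancel₀ (hne j)
      linear_combination hj
    have hc : r.1 * r.2 ≠ 0 := fun h0 => by simpa [h0] using key 0
    have h01 : α 0 = α 1 := mul_left_cancel₀ hc ((key 0).trans (key 1).symm)
    exact absurd (hinj h01) (by decide)
  have hnonempty : Nonempty {r : F × F //
      (fun j => ((0 : F) + r.1 * α j) * ((1 : F) + r.2 * α j)) = α} :=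
    ⟨⟨(1, 0), by funext j; simp⟩⟩
  rw [Nat.card_of_isEmpty] at hα
  exact Nat.card_pos.ne hα
end

section
/- Let F be a finite field. For (α, β) ∈ F², let D(α,β) be the probability distribution on F³ of the triple (y_1, y_2, y_3) defined by: choose (a_1, a_2, b_1, b_2) uniformly at random in F⁴, set a_3 = α − a_1 − a_2 and b_3 = β − b_1 − b_2, and let y_1 = (a_2 + a_3)(b_2 + b_3), y_2 = a_1 b_1 + a_1 b_3 + a_3 b_1, y_3 = a_1 b_2 + a_2 b_1. Then for all (α, β), (α', β') ∈ F² with α·β = α'·β', we have D(α,β) = D(α',β'). -/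
/-!
The shares satisfy `y₁ = (α - a₁)(β - b₁)`, `y₃ = a₁b₂ + a₂b₁` and `y₂ = αβ - y₁ - y₃`, so only
`(y₁, y₃)` matters. For fixed `(a₁, b₁) ≠ 0` the share `y₃` is a nonzero linear form in the
uniform pair `(a₂, b₂)`, hence uniform whatever `(a₁, b₁)` is; for `(a₁, b₁) = 0` it vanishes
(`exists_straightening`). In the coordinates `(u, v) = (α - a₁, β - b₁)`, where `y₁ = uv` and the
exceptional point is `(α, β)`, the transposition of `(α, β)` and `(α', β')` preserves `uv`, because
`αβ = α'β'`, and matches the exceptional points (`exists_head_equiv`). Combining this transposition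
on `(a₁, b₁)` with the straightenings of `(a₂, b₂)` gives a bijection of the randomness that
preserves all shares.
-/

/-- The output shares of the 1-private 3-server Greedy Monomial CNF HSS for the product
`α·β`, as a function of the free additive shares `a₁, a₂, b₁, b₂` (with
`a₃ = α − a₁ − a₂` and `b₃ = β − b₁ − b₂`). -/
def greedyCNFShares (F : Type) [Field F] (α β a₁ a₂ b₁ b₂ : F) : Fin 3 → F :=
  ![(a₂ + (α - a₁ - a₂)) * (b₂ + (β - b₁ - b₂)),
    a₁ * b₁ + a₁ * (β - b₁ - b₂) + (α - a₁ - a₂) * b₁,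
    a₁ * b₂ + a₂ * b₁]

/-- A bijection of the randomness `(a₂, b₂)` turning the form `a₁b₂ + a₂b₁` into the first
coordinate when `p = (a₁, b₁)` is nonzero. -/
theorem exists_straightening {F : Type} [Field F] [DecidableEq F] (p : F × F) :
    ∃ f : F × F ≃ F × F, ∀ q,
      p.1 * (f q).2 + (f q).1 * p.2 = if p = 0 then 0 else q.1 := by
  obtain ⟨a, b⟩ := p
  by_cases ha : a = 0
  · by_cases hb : b = 0
    · exact ⟨Equiv.refl _, fun q => by simp [ha, hb]⟩
    · refine ⟨⟨fun q => (q.1 / b, q.2), fun r => (r.1 * b, r.2), fun q => ?_, fun r => ?_⟩,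
        fun q => ?_⟩
      · simp [hb]
      · simp [hb]
      · simp [ha, hb]
  · refine ⟨⟨fun q => (q.2, (q.1 - q.2 * b) / a), fun r => (a * r.2 + r.1 * b, r.1),
      fun q => ?_, fun r => ?_⟩, fun q => ?_⟩
    · ext <;> simp; field_simp; ring
    · ext <;> simp; field_simp
    · simp [ha]; field_simp; ring

/-- A bijection of the randomness `(a₁, b₁)` that preserves the first share and the condition
`(a₁, b₁) = 0`. -/
theorem exists_head_equiv {F : Type} [Field F] [DecidableEq F] {α β α' β' : F}
    (h : α * β = α' * β') :
    ∃ σ : F × F ≃ F × F, ∀ p, (σ p = 0 ↔ p = 0) ∧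
      (α' - (σ p).1) * (β' - (σ p).2) = (α - p.1) * (β - p.2) := by
  refine ⟨((Equiv.subLeft (α, β)).trans (Equiv.swap (α, β) (α', β'))).trans
    (Equiv.subLeft (α', β')), fun p => ⟨?_, ?_⟩⟩
  · simp only [Equiv.trans_apply, Equiv.subLeft_apply, sub_eq_zero]
    rw [eq_comm, Equiv.swap_apply_eq_iff, Equiv.swap_apply_right, sub_eq_self]
  · have key : ∀ w : F × F, (Equiv.swap (α, β) (α', β') w).1 *
        (Equiv.swap (α, β) (α', β') w).2 = w.1 * w.2 := by
      intro w
      rw [Equiv.swap_apply_def]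
      split_ifs with h₁ h₂
      · simp [h₁, h]
      · simp [h₂, h]
      · rfl
    simpa using key ((α, β) - p)

/-- The shares in terms of the product `α * β`, the first share and the third share. -/
theorem greedyCNFShares_eq {F : Type} [Field F] (α β a₁ a₂ b₁ b₂ : F) :
    greedyCNFShares F α β a₁ a₂ b₁ b₂ =
      ![(α - a₁) * (β - b₁), α * β - (α - a₁) * (β - b₁) - (a₁ * b₂ + a₂ * b₁),
        a₁ * b₂ + a₂ * b₁] := by
  unfold greedyCNFShares
  congr 1
  · ring
  · congr 1
    ring

/-- **The Greedy Monomial CNF HSS for products is symmetrically private.**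
For any finite field `F` and any `(α, β), (α', β') ∈ F²` with `α·β = α'·β'`, the
distribution of the output-share triple `(y₁, y₂, y₃)` — over uniformly random
`(a₁, a₂, b₁, b₂) ∈ F⁴`, with `a₃ = α − a₁ − a₂`, `b₃ = β − b₁ − b₂`,
`y₁ = (a₂ + a₃)(b₂ + b₃)`, `y₂ = a₁b₁ + a₁b₃ + a₃b₁`, `y₃ = a₁b₂ + a₂b₁` — is the same
for `(α, β)` and `(α', β')`: every outcome is attained by equally many choices of the
randomness. -/
theorem greedy_cnf_hss_symmetrically_private (F : Type) [Field F] [Fintype F]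
    (α β α' β' : F) (h : α * β = α' * β') :
    ∀ y : Fin 3 → F,
      Nat.card {v : F × F × F × F //
          greedyCNFShares F α β v.1 v.2.1 v.2.2.1 v.2.2.2 = y} =
        Nat.card {v : F × F × F × F //
          greedyCNFShares F α' β' v.1 v.2.1 v.2.2.1 v.2.2.2 = y} := by
  classical
  intro y
  obtain ⟨σ, hσ⟩ := exists_head_equiv h
  choose f hf using fun p : F × F => exists_straightening p
  -- `r` regroups `(a₁, a₂, b₁, b₂)` as `((a₁, b₁), (a₂, b₂))`.
  let r : F × F × F × F ≃ (F × F) × (F × F) :=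
    ⟨fun v => ((v.1, v.2.2.1), (v.2.1, v.2.2.2)), fun w => (w.1.1, w.2.1, w.1.2, w.2.2),
      fun _ => rfl, fun _ => rfl⟩
  let e : (F × F) × (F × F) ≃ (F × F) × (F × F) :=
    Equiv.prodShear σ fun p => (f p).symm.trans (f (σ p))
  have third : ∀ p q : F × F, (σ p).1 * (f (σ p) ((f p).symm q)).2 +
      (f (σ p) ((f p).symm q)).1 * (σ p).2 = p.1 * q.2 + q.1 * p.2 := by
    intro p q
    have h₁ := hf p ((f p).symm q)
    rw [Equiv.apply_symm_apply] at h₁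
    rw [hf, h₁]
    simp only [(hσ p).1]
  refine Nat.card_congr (Equiv.subtypeEquiv ((r.trans e).trans r.symm) fun v => ?_)
  have h₁ := (hσ (v.1, v.2.2.1)).2
  have h₃ := third (v.1, v.2.2.1) (v.2.1, v.2.2.2)
  rw [greedyCNFShares_eq, greedyCNFShares_eq]
  simp only [Equiv.trans_apply, r, e, Equiv.coe_fn_mk, Equiv.coe_fn_symm_mk,
    Equiv.prodShear_apply]
  rw [h₁, h₃, h]
end
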